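/- arXiv:1702.04764 — 8 statements merged into one kernel-verified Lean document; each statement's English description precedes it below -/
import Mathlib

section
/- Let d ≥ 1 and let X ⊆ ℝ^d be a convex set. Let n ≥ 1 and let 𝒳ₙ be a finite subset of X that is quasi-uniformly distributed in X with constants c, C (so 0 < c ≤ 2C). Let κ > 0, α > (d+1)/2, and let K ∈ 𝕂_{κ,α}. Set βₙ := C^{−1} n^{1/d}. Then for every x ∈ X, Σ_{y∈𝒳ₙ} K(βₙ(x−y)) ≤ κ · K_d · (1 + Σ_{j=1}^∞ [(j+1)^d − j^d] · j^{−2α}), where K_d := 2^{(3d+3)/2} (C/c)^d and the series converges since 2α > d+1. Consequently, the quasi-interpolation operators 𝒯ₙ : f ↦ (x ↦ Σ_{y∈𝒳ₙ} f(y) K(βₙ(x−y))) are uniformly bounded on the space of bounded continuous functions on X with operator norms at most this constant. -/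
open Metric

open MeasureTheory in
/-- Volume packing bound: points of a closed ball of radius `R` with mutual distances at least
`2 * r`. -/
theorem card_mul_pow_le_of_separated {d : ℕ} {ι : Type*} (s : Finset ι)
    (p : ι → EuclideanSpace ℝ (Fin d)) {r R : ℝ} (hr : 0 < r) (hR : 0 ≤ R)
    (hsep : ∀ i ∈ s, ∀ j ∈ s, i ≠ j → 2 * r ≤ ‖p i - p j‖) (hp : ∀ i ∈ s, ‖p i‖ ≤ R) :
    (s.card : ℝ) * r ^ d ≤ (R + r) ^ d := by
  set μ : Measure (EuclideanSpace ℝ (Fin d)) := volume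
  have hdisj : (s : Set ι).PairwiseDisjoint fun i ↦ ball (p i) r := by
    intro i hi j hj hij
    apply ball_disjoint_ball
    rw [dist_eq_norm]
    linarith [hsep i hi j hj hij]
  have hsub : (⋃ i ∈ s, ball (p i) r) ⊆ ball 0 (R + r) := by
    refine Set.iUnion₂_subset fun i hi ↦ ball_subset_ball' ?_
    rw [dist_zero_right]
    linarith [hp i hi]
  have hfr : Module.finrank ℝ (EuclideanSpace ℝ (Fin d)) = d := by simp
  have hvol : (s.card : ENNReal) * ENNReal.ofReal (r ^ d) * μ (ball 0 1) ≤
      ENNReal.ofReal ((R + r) ^ d) * μ (ball 0 1) := by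
    calc (s.card : ENNReal) * ENNReal.ofReal (r ^ d) * μ (ball 0 1)
        = ∑ i ∈ s, μ (ball (p i) r) := by
          simp [Measure.addHaar_ball_of_pos μ _ hr, hfr, mul_assoc]
      _ = μ (⋃ i ∈ s, ball (p i) r) :=
          (measure_biUnion_finset hdisj fun _ _ ↦ measurableSet_ball).symm
      _ ≤ μ (ball 0 (R + r)) := measure_mono hsub
      _ = ENNReal.ofReal ((R + r) ^ d) * μ (ball 0 1) := by
          rw [Measure.addHaar_ball_of_pos μ _ (by linarith), hfr]
  have hcancel := (ENNReal.mul_le_mul_iff_left (measure_ball_pos μ 0 one_pos).ne'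
    measure_ball_lt_top.ne).1 hvol
  rw [← ENNReal.ofReal_natCast, ← ENNReal.ofReal_mul (Nat.cast_nonneg _)] at hcancel
  exact (ENNReal.ofReal_le_ofReal_iff (by positivity)).1 hcancel

open MeasureTheory in
/-- If at most `B * t ^ d` of the numbers `u i ≥ 1` are below `t`, then the sum of
`(u i) ^ (-(d + 1))` is at most `(d + 1) * B`. -/
theorem sum_rpow_le_of_card_lt_le {ι : Type*} (s : Finset ι) (u : ι → ℝ) (d : ℕ) (B : ℝ)
    (hu : ∀ i ∈ s, 1 ≤ u i)
    (hcard : ∀ t : ℝ, 1 < t → ((s.filter fun i ↦ u i < t).card : ℝ) ≤ B * t ^ d) :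
    ∑ i ∈ s, u i ^ (-((d : ℝ) + 1)) ≤ ((d : ℝ) + 1) * B := by
  set g : ℝ → ℝ := fun t ↦ ((d : ℝ) + 1) * t ^ (-((d : ℝ) + 2))
  have hg : ∀ a : ℝ, 1 ≤ a → IntegrableOn g (Set.Ioi a) := fun a ha ↦
    (integrableOn_Ioi_rpow_of_lt (by linarith [(Nat.cast_nonneg d : (0 : ℝ) ≤ d)])
      (by linarith)).const_mul _
  have hgint : ∀ a : ℝ, 1 ≤ a → ∫ t in Set.Ioi a, g t = a ^ (-((d : ℝ) + 1)) := by
    intro a ha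
    have hd : (0 : ℝ) ≤ d := Nat.cast_nonneg d
    rw [integral_const_mul, integral_Ioi_rpow_of_lt (by linarith) (by linarith)]
    have hexp : -((d : ℝ) + 2) + 1 = -((d : ℝ) + 1) := by ring
    rw [hexp]
    field_simp
  have hind : ∀ i ∈ s, ∫ t in Set.Ioi 1, (Set.Ioi (u i)).indicator g t =
      u i ^ (-((d : ℝ) + 1)) := by
    intro i hi
    rw [setIntegral_indicator measurableSet_Ioi,
      Set.inter_eq_right.2 (Set.Ioi_subset_Ioi (hu i hi)), hgint _ (hu i hi)]
  have hintInd : ∀ i ∈ s, IntegrableOn ((Set.Ioi (u i)).indicator g) (Set.Ioi 1) :=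
    fun i _ ↦ (hg 1 le_rfl).indicator measurableSet_Ioi
  have hsq : IntegrableOn (fun t : ℝ ↦ ((d : ℝ) + 1) * B * t ^ (-2 : ℝ)) (Set.Ioi 1) :=
    (integrableOn_Ioi_rpow_of_lt (by norm_num) one_pos).const_mul _
  calc ∑ i ∈ s, u i ^ (-((d : ℝ) + 1))
      = ∫ t in Set.Ioi 1, ∑ i ∈ s, (Set.Ioi (u i)).indicator g t := by
        rw [integral_finsetSum _ hintInd]
        exact (Finset.sum_congr rfl hind).symm
    _ ≤ ∫ t in Set.Ioi 1, ((d : ℝ) + 1) * B * t ^ (-2 : ℝ) := by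
        refine setIntegral_mono_on (integrable_finsetSum _ hintInd) hsq measurableSet_Ioi ?_
        intro t ht
        have ht' : (1 : ℝ) < t := ht
        have hpos : 0 < t := by linarith
        have hsum : ∑ i ∈ s, (Set.Ioi (u i)).indicator g t =
            ((s.filter fun i ↦ u i < t).card : ℝ) * g t := by
          simp [Set.indicator_apply, ← Finset.sum_filter]
        have hpow : t ^ d * t ^ (-((d : ℝ) + 2)) = t ^ (-2 : ℝ) := by
          rw [← Real.rpow_natCast, ← Real.rpow_add hpos]
          congr 1
          ring
        have hg0 : 0 ≤ g t := by positivity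
        calc _ = ((s.filter fun i ↦ u i < t).card : ℝ) * g t := hsum
          _ ≤ B * t ^ d * g t := mul_le_mul_of_nonneg_right (hcard t ht') hg0
          _ = ((d : ℝ) + 1) * B * (t ^ d * t ^ (-((d : ℝ) + 2))) := by ring
          _ = _ := by rw [hpow]
    _ = ((d : ℝ) + 1) * B := by
        rw [integral_const_mul, integral_Ioi_rpow_of_lt (by norm_num) one_pos]
        norm_num

theorem one_add_sq_rpow_neg_le {t b α : ℝ} (ht : 0 ≤ t) (hb : 0 ≤ b) (hα : b / 2 ≤ α) :
    (1 + t ^ 2) ^ (-α) ≤ 2 ^ (b / 2) * (1 + t) ^ (-b) := by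
  have hle : (1 + t) ^ 2 / 2 ≤ 1 + t ^ 2 := by nlinarith [sq_nonneg (t - 1)]
  calc (1 + t ^ 2) ^ (-α) ≤ (1 + t ^ 2) ^ (-(b / 2)) :=
        Real.rpow_le_rpow_of_exponent_le (by nlinarith) (by linarith)
    _ ≤ ((1 + t) ^ 2 / 2) ^ (-(b / 2)) :=
        Real.rpow_le_rpow_of_nonpos (by positivity) hle (by linarith)
    _ = 2 ^ (b / 2) * (1 + t) ^ (-b) := by
        rw [Real.div_rpow (by positivity) (by norm_num), Real.rpow_neg (by norm_num : (0 : ℝ) ≤ 2),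
          div_inv_eq_mul, ← Real.rpow_natCast (1 + t) 2, ← Real.rpow_mul (by positivity), mul_comm]
        congr 2
        push_cast
        ring

theorem mul_succ_pow_sub_pow_le {m : ℝ} (hm : 1 ≤ m) (d : ℕ) :
    m * ((m + 1) ^ d - m ^ d) ≤ (2 ^ d - 1) * m ^ d := by
  induction d with
  | zero => simp
  | succ d ih =>
    have h2 : (0 : ℝ) ≤ 2 ^ d - 1 := sub_nonneg.2 (one_le_pow₀ (by norm_num))
    have hmd : (0 : ℝ) ≤ m ^ d := by positivity
    have h1 := mul_le_mul_of_nonneg_right ih (by linarith : (0 : ℝ) ≤ m + 1)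
    have h3 := mul_nonneg (mul_nonneg h2 hmd) (sub_nonneg.2 hm)
    simp only [pow_succ]
    nlinarith

theorem summable_shell_series (d : ℕ) {α : ℝ} (hα : ((d : ℝ) + 1) / 2 < α) :
    Summable fun j : ℕ ↦
      (((j : ℝ) + 2) ^ d - ((j : ℝ) + 1) ^ d) * ((j : ℝ) + 1) ^ (-(2 * α)) := by
  have hbase : Summable fun j : ℕ ↦ (2 ^ d - 1 : ℝ) * (((j + 1 : ℕ) : ℝ) ^ (-2 : ℝ)) :=
    ((summable_nat_add_iff 1).2 (Real.summable_nat_rpow.2 (by norm_num))).mul_left _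
  refine Summable.of_nonneg_of_le (fun j ↦ ?_) (fun j ↦ ?_) hbase
  · have : ((j : ℝ) + 1) ^ d ≤ ((j : ℝ) + 2) ^ d := by gcongr; norm_num
    exact mul_nonneg (sub_nonneg.2 this) (by positivity)
  · push_cast
    set m : ℝ := (j : ℝ) + 1 with hm
    have hm1 : 1 ≤ m := by simp [hm]
    have hm0 : 0 < m := by linarith
    have hj : (j : ℝ) + 2 = m + 1 := by rw [hm]; ring
    have h2 : (0 : ℝ) ≤ 2 ^ d - 1 := sub_nonneg.2 (one_le_pow₀ (by norm_num))
    have hexp : m ^ d / m * m ^ (-(2 * α)) = m ^ ((d : ℝ) - 1 - 2 * α) := by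
      rw [← Real.rpow_natCast, ← Real.rpow_sub_one hm0.ne', ← Real.rpow_add hm0]
      congr 1
    rw [hj]
    calc ((m + 1) ^ d - m ^ d) * m ^ (-(2 * α))
        ≤ ((2 ^ d - 1) * m ^ d / m) * m ^ (-(2 * α)) := by
          gcongr
          rw [le_div_iff₀ hm0, mul_comm]
          exact mul_succ_pow_sub_pow_le hm1 d
      _ = (2 ^ d - 1) * m ^ ((d : ℝ) - 1 - 2 * α) := by rw [← hexp]; ring
      _ ≤ (2 ^ d - 1) * m ^ (-2 : ℝ) := by
          gcongr
          linarith

theorem two_pow_le_one_add_tsum_shell (d : ℕ) {α : ℝ} (hα : ((d : ℝ) + 1) / 2 < α) :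
    (2 : ℝ) ^ d ≤ 1 + ∑' j : ℕ,
      (((j : ℝ) + 2) ^ d - ((j : ℝ) + 1) ^ d) * ((j : ℝ) + 1) ^ (-(2 * α)) := by
  have h := (summable_shell_series d hα).le_tsum 0 fun j _ ↦ by
    have : ((j : ℝ) + 1) ^ d ≤ ((j : ℝ) + 2) ^ d := by gcongr; norm_num
    exact mul_nonneg (sub_nonneg.2 this) (by positivity)
  simp only [Nat.cast_zero, zero_add, one_pow, Real.one_rpow, mul_one] at h
  linarith

/-- Sum of a radially decaying kernel over points with mutual distances at least `q ≤ 2`. -/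
theorem sum_le_of_separated_of_decay {d : ℕ} {ι : Type*} (s : Finset ι)
    (p : ι → EuclideanSpace ℝ (Fin d)) {q κ α : ℝ} (hq : 0 < q) (hq2 : q ≤ 2)
    (hsep : ∀ i ∈ s, ∀ j ∈ s, i ≠ j → q ≤ ‖p i - p j‖) (hκ : 0 ≤ κ)
    (hα : ((d : ℝ) + 1) / 2 ≤ α) (K : EuclideanSpace ℝ (Fin d) → ℝ)
    (hK : ∀ x, K x ≤ κ * (1 + ‖x‖ ^ 2) ^ (-α)) :
    ∑ i ∈ s, K (p i) ≤ κ * 2 ^ (((d : ℝ) + 1) / 2) * (((d : ℝ) + 1) * (2 / q) ^ d) := by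
  have hsum : ∑ i ∈ s, (1 + ‖p i‖) ^ (-((d : ℝ) + 1)) ≤ ((d : ℝ) + 1) * (2 / q) ^ d := by
    refine sum_rpow_le_of_card_lt_le s (fun i ↦ 1 + ‖p i‖) d _ (fun i _ ↦ by simp) ?_
    intro t ht
    have hcard := card_mul_pow_le_of_separated (s.filter fun i ↦ 1 + ‖p i‖ < t) p
      (r := q / 2) (R := t - 1) (by linarith) (by linarith)
      (fun i hi j hj hij ↦ by
        have := hsep i (Finset.mem_filter.1 hi).1 j (Finset.mem_filter.1 hj).1 hij
        linarith)
      (fun i hi ↦ by linarith [(Finset.mem_filter.1 hi).2])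
    have hle : (t - 1 + q / 2) ^ d ≤ t ^ d :=
      pow_le_pow_left₀ (by linarith) (by linarith) d
    have hinv : (2 / q) ^ d = ((q / 2) ^ d)⁻¹ := by rw [← inv_pow, inv_div]
    rw [hinv, inv_mul_eq_div, le_div_iff₀ (by positivity)]
    exact hcard.trans hle
  calc ∑ i ∈ s, K (p i)
      ≤ ∑ i ∈ s, κ * 2 ^ (((d : ℝ) + 1) / 2) * (1 + ‖p i‖) ^ (-((d : ℝ) + 1)) := by
        refine Finset.sum_le_sum fun i _ ↦ (hK _).trans ?_
        rw [mul_assoc]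
        exact mul_le_mul_of_nonneg_left
          (one_add_sq_rpow_neg_le (norm_nonneg _) (by positivity) hα) hκ
    _ = κ * 2 ^ (((d : ℝ) + 1) / 2) * ∑ i ∈ s, (1 + ‖p i‖) ^ (-((d : ℝ) + 1)) :=
        (Finset.mul_sum _ _ _).symm
    _ ≤ _ := mul_le_mul_of_nonneg_left hsum (by positivity)

theorem shepard_operator_uniform_bound (d n : ℕ) (hd : 1 ≤ d) (hn : 1 ≤ n)
    (X : Set (EuclideanSpace ℝ (Fin d))) (hX : Convex ℝ X) (c C : ℝ) (hc : 0 < c)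
    (hcC : c ≤ 2 * C) (Xn : Finset (EuclideanSpace ℝ (Fin d))) (hXnX : ↑Xn ⊆ X)
    (hsep : ∀ x ∈ Xn, ∀ y ∈ Xn, x ≠ y → c * (n : ℝ) ^ (-(1 : ℝ) / d) ≤ ‖x - y‖)
    (hfill : ∀ x ∈ X, ∃ y ∈ Xn, ‖x - y‖ ≤ C * (n : ℝ) ^ (-(1 : ℝ) / d))
    (κ α : ℝ) (hκ : 0 < κ) (hα : ((d : ℝ) + 1) / 2 < α)
    (K : EuclideanSpace ℝ (Fin d) → ℝ) (hKcont : Continuous K) (hKnonneg : ∀ x, 0 ≤ K x)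
    (hm₁pos : 0 < sInf (K '' closedBall (0 : EuclideanSpace ℝ (Fin d)) 1))
    (hKdecay : ∀ x, K x ≤ κ * (1 + ‖x‖ ^ 2) ^ (-α)) :
    (∀ x ∈ X, ∑ y ∈ Xn, K ((C⁻¹ * (n : ℝ) ^ ((1 : ℝ) / d)) • (x - y)) ≤
      κ * ((2 : ℝ) ^ ((3 * (d : ℝ) + 3) / 2) * (C / c) ^ d) *
        (1 + ∑' j : ℕ, (((j : ℝ) + 2) ^ d - ((j : ℝ) + 1) ^ d) * ((j : ℝ) + 1) ^ (-(2 * α)))) ∧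
    ∀ (f : EuclideanSpace ℝ (Fin d) → ℝ) (M : ℝ), (∀ y ∈ X, |f y| ≤ M) →
      ∀ x ∈ X, |∑ y ∈ Xn, f y * K ((C⁻¹ * (n : ℝ) ^ ((1 : ℝ) / d)) • (x - y))| ≤
        κ * ((2 : ℝ) ^ ((3 * (d : ℝ) + 3) / 2) * (C / c) ^ d) *
          (1 + ∑' j : ℕ, (((j : ℝ) + 2) ^ d - ((j : ℝ) + 1) ^ d) * ((j : ℝ) + 1) ^ (-(2 * α))) *
          M := by
  have hC : 0 < C := by linarith
  have hn0 : (0 : ℝ) < n := by exact_mod_cast hn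
  set β : ℝ := C⁻¹ * (n : ℝ) ^ ((1 : ℝ) / d)
  have hβ : 0 < β := by positivity
  have hβsep : β * (c * (n : ℝ) ^ (-(1 : ℝ) / d)) = c / C := by
    have hinv : (n : ℝ) ^ ((1 : ℝ) / d) * (n : ℝ) ^ (-(1 : ℝ) / d) = 1 := by
      rw [← Real.rpow_add hn0, neg_div, add_neg_cancel, Real.rpow_zero]
    calc _ = c / C * ((n : ℝ) ^ ((1 : ℝ) / d) * (n : ℝ) ^ (-(1 : ℝ) / d)) := by
          simp only [β]; ring
      _ = c / C := by rw [hinv, mul_one]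
  have hbound : ∀ x ∈ X, ∑ y ∈ Xn, K (β • (x - y)) ≤
      κ * ((2 : ℝ) ^ ((3 * (d : ℝ) + 3) / 2) * (C / c) ^ d) *
        (1 + ∑' j : ℕ,
          (((j : ℝ) + 2) ^ d - ((j : ℝ) + 1) ^ d) * ((j : ℝ) + 1) ^ (-(2 * α))) := by
    intro x _
    have hT := two_pow_le_one_add_tsum_shell d hα
    set T : ℝ := 1 + ∑' j : ℕ,
      (((j : ℝ) + 2) ^ d - ((j : ℝ) + 1) ^ d) * ((j : ℝ) + 1) ^ (-(2 * α))
    have hsum := sum_le_of_separated_of_decay Xn (fun y ↦ β • (x - y)) (q := c / C)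
      (by positivity) ((div_le_iff₀ hC).2 hcC)
      (fun y hy z hz hyz ↦ by
        rw [← smul_sub, sub_sub_sub_cancel_left, norm_smul, Real.norm_of_nonneg hβ.le, ← hβsep]
        exact mul_le_mul_of_nonneg_left (hsep z hz y hy hyz.symm) hβ.le)
      hκ.le hα.le K hKdecay
    have hdT : (d : ℝ) + 1 ≤ 2 * T := by
      have h : (d : ℝ) + 1 ≤ 2 ^ d := by exact_mod_cast Nat.lt_two_pow_self
      have h0 : (0 : ℝ) < 2 ^ d := by positivity
      linarith
    have hpow : (2 : ℝ) ^ ((3 * (d : ℝ) + 3) / 2) = 2 ^ (((d : ℝ) + 1) / 2) * (2 ^ d * 2) := by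
      rw [← pow_succ, ← Real.rpow_natCast, ← Real.rpow_add two_pos]
      congr 1
      push_cast
      ring
    calc _ ≤ _ := hsum
      _ = κ * 2 ^ (((d : ℝ) + 1) / 2) * (2 ^ d * (C / c) ^ d) * ((d : ℝ) + 1) := by
        rw [div_div_eq_mul_div, mul_div_assoc, mul_pow]
        ring
      _ ≤ κ * 2 ^ (((d : ℝ) + 1) / 2) * (2 ^ d * (C / c) ^ d) * (2 * T) :=
        mul_le_mul_of_nonneg_left hdT (by positivity)
      _ = _ := by
        rw [hpow]
        ring
  refine ⟨hbound, fun f M hf x hx ↦ ?_⟩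
  have hM : 0 ≤ M := (abs_nonneg _).trans (hf x hx)
  calc |∑ y ∈ Xn, f y * K (β • (x - y))|
      ≤ ∑ y ∈ Xn, |f y * K (β • (x - y))| := Finset.abs_sum_le_sum_abs _ _
    _ ≤ ∑ y ∈ Xn, M * K (β • (x - y)) := by
        refine Finset.sum_le_sum fun y hy ↦ ?_
        rw [abs_mul, abs_of_nonneg (hKnonneg _)]
        exact mul_le_mul_of_nonneg_right (hf y (hXnX hy)) (hKnonneg _)
    _ = (∑ y ∈ Xn, K (β • (x - y))) * M := by rw [← Finset.mul_sum, mul_comm]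
    _ ≤ _ := mul_le_mul_of_nonneg_right (hbound x hx) hM
end

section
/- Let d ≥ 1, n ≥ 1, and let c, C be constants with 0 < c ≤ 2C. Let 𝒳ₙ ⊂ ℝ^d be a set in which any two distinct points are at Euclidean distance at least c·n^{−1/d}. Fix any center x₀ ∈ ℝ^d and for each integer j ≥ 1 let 𝒜_{n,j} := {y ∈ ℝ^d : (j−1)·C·n^{−1/d} ≤ |y − x₀| < j·C·n^{−1/d}} be the j-th concentric annulus of thickness C·n^{−1/d}. Then the number of points of 𝒳ₙ lying in 𝒜_{n,j} satisfies |𝒳ₙ ∩ 𝒜_{n,j}| ≤ K_d · [j^d − (j−1)^d], where K_d := 2^{(3d+3)/2} (C/c)^d. -/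
open MeasureTheory Metric Module

/-- The linear map scaling by `a` along the unit vector `e` and by `b` orthogonally to it has
determinant `a * b ^ (dim - 1)`. -/
lemma exists_linearMap_det_of_unit {V : Type*} [NormedAddCommGroup V] [InnerProductSpace ℝ V]
    [FiniteDimensional ℝ V] [Nontrivial V] (e : V) (he : ‖e‖ = 1) (a b : ℝ) (hb : b ≠ 0) :
    ∃ L : V →ₗ[ℝ] V, LinearMap.det L = a * b ^ (finrank ℝ V - 1) ∧
      ∀ w, L w = b • w + ((a - b) * inner ℝ e w) • e := by
  have hdim : 0 < finrank ℝ V := finrank_pos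
  refine ⟨b • LinearMap.transvection ((a / b - 1) • (innerₛₗ ℝ e)) e, ?_, fun w => ?_⟩
  · rw [LinearMap.det_smul, LinearMap.transvection.det]
    obtain ⟨k, hk⟩ : ∃ k, finrank ℝ V = k + 1 := ⟨_, (Nat.succ_pred_eq_of_pos hdim).symm⟩
    simp only [LinearMap.smul_apply, innerₛₗ_apply_apply, real_inner_self_eq_norm_sq, he, hk,
      smul_eq_mul, Nat.add_sub_cancel]
    field_simp
    ring
  · simp only [LinearMap.smul_apply, LinearMap.transvection.apply, innerₛₗ_apply_apply,
      smul_eq_mul, smul_add, smul_smul]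
    congr 2
    field_simp

/-- Pythagoras for a point of an ellipsoid of revolution with axis `e`. -/
lemma norm_sq_smul_add_stretch {V : Type*} [NormedAddCommGroup V] [InnerProductSpace ℝ V]
    (e w : V) (he : ‖e‖ = 1) (s a b : ℝ) :
    ‖s • e + (b • w + ((a - b) * inner ℝ e w) • e)‖ ^ 2 =
      (s + a * inner ℝ e w) ^ 2 + b ^ 2 * (‖w‖ ^ 2 - inner ℝ e w ^ 2) := by
  have hee : inner ℝ e e = (1 : ℝ) := by rw [real_inner_self_eq_norm_sq, he]; norm_num
  rw [← real_inner_self_eq_norm_sq, ← real_inner_self_eq_norm_sq]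
  simp only [inner_add_left, inner_add_right, real_inner_smul_left, real_inner_smul_right, hee,
    real_inner_comm e w]
  ring

/-- Every vector is a nonnegative multiple of a unit vector. -/
lemma exists_unit_smul_norm {V : Type*} [NormedAddCommGroup V] [NormedSpace ℝ V] [Nontrivial V]
    (x : V) : ∃ e : V, ‖e‖ = 1 ∧ x = ‖x‖ • e := by
  by_cases hx : x = 0
  · obtain ⟨e, he⟩ := exists_norm_eq V zero_le_one
    exact ⟨e, he, by simp [hx]⟩
  · have hx' : ‖x‖ ≠ 0 := norm_ne_zero_iff.2 hx
    exact ⟨‖x‖⁻¹ • x, by simp [norm_smul, hx'], by simp [smul_smul, hx']⟩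

lemma stretch_norm_sq_lt_ball {ρ δ u : ℝ} (hρ : 0 < ρ) (hδ : |δ| ≤ ρ / 2) :
    (δ + ρ / 4 * u) ^ 2 + ρ ^ 2 / 2 * (1 - u ^ 2) < ρ ^ 2 := by
  have hδ2 : δ ^ 2 ≤ (ρ / 2) ^ 2 := sq_le_sq.2 (hδ.trans (le_abs_self _))
  nlinarith [sq_nonneg (4 * δ - 7 * ρ * u), sq_pos_of_pos hρ]

lemma stretch_norm_sq_lt_outer {ρ t Q u : ℝ} (hρ : 0 < ρ) (hQ : ρ ≤ Q) (ht : ρ / 2 ≤ t)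
    (htQ : t ≤ Q - ρ / 2) (hu : -1 ≤ u) (hu' : u ≤ 1) :
    (t + ρ / 4 * u) ^ 2 + ρ ^ 2 / 2 * (1 - u ^ 2) < Q ^ 2 := by
  have hmono : (t + ρ / 4 * u) ^ 2 ≤ (Q - ρ / 2 + ρ / 4 * u) ^ 2 :=
    pow_le_pow_left₀ (by nlinarith) (by linarith) 2
  have hscale : ρ * (ρ * (1 - u / 2)) ≤ ρ * (Q * (1 - u / 2)) := by
    gcongr
    linarith
  have hpos : 0 < 1 / 4 - u / 4 + 7 / 16 * u ^ 2 := by nlinarith [sq_nonneg (1 - 2 * u)]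
  linarith [mul_pos (mul_pos hρ hρ) hpos]

/-- The part of a ball centred in an annulus that lies in the annulus contains an ellipsoid with
one semi-axis `ρ / 4` and all others `ρ / √2`, provided `ρ` is at most the annulus width. -/
lemma volume_ball_inter_annulus_ge {V : Type*} [NormedAddCommGroup V] [InnerProductSpace ℝ V]
    [FiniteDimensional ℝ V] [Nontrivial V] [MeasurableSpace V] [BorelSpace V]
    (μ : Measure V) [μ.IsAddHaarMeasure] (x x₀ : V) {P Q ρ : ℝ} (hP : 0 ≤ P) (hρ : 0 < ρ)
    (hPQ : P + ρ ≤ Q) (hPx : P ≤ ‖x - x₀‖) (hxQ : ‖x - x₀‖ < Q) :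
    ENNReal.ofReal (ρ / 4 * (ρ / √2) ^ (finrank ℝ V - 1)) * μ (ball 0 1) ≤
      μ (ball x ρ ∩ {y | P ≤ ‖y - x₀‖ ∧ ‖y - x₀‖ < Q}) := by
  obtain ⟨e, he, hxe⟩ := exists_unit_smul_norm (x - x₀)
  set r := ‖x - x₀‖
  obtain ⟨t, htP, htQ, htr, hrt⟩ :
      ∃ t, P + ρ / 2 ≤ t ∧ t ≤ Q - ρ / 2 ∧ t - r ≤ ρ / 2 ∧ r - t ≤ ρ / 2 := by
    rcases le_total r (P + ρ / 2) with h | h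
    · exact ⟨P + ρ / 2, by linarith, by linarith, by linarith, by linarith⟩
    · rcases le_total r (Q - ρ / 2) with h' | h'
      · exact ⟨r, h, h', by linarith, by linarith⟩
      · exact ⟨Q - ρ / 2, by linarith, by linarith, by linarith, by linarith⟩
  have hτ : 0 < ρ / √2 := by positivity
  have hτ2 : (ρ / √2) ^ 2 = ρ ^ 2 / 2 := by rw [div_pow, Real.sq_sqrt zero_le_two]
  obtain ⟨L, hdet, hL⟩ := exists_linearMap_det_of_unit e he (ρ / 4) (ρ / √2) hτ.ne'
  have hvol : μ ((fun y => (x₀ + t • e) + y) '' (L '' ball 0 1)) =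
      ENNReal.ofReal (ρ / 4 * (ρ / √2) ^ (finrank ℝ V - 1)) * μ (ball 0 1) := by
    rw [Set.image_add_left, measure_preimage_add, Measure.addHaar_image_linearMap, hdet,
      abs_of_nonneg (by positivity)]
  rw [← hvol]
  refine measure_mono ?_
  rintro _ ⟨_, ⟨w, hw, rfl⟩, rfl⟩
  have hw1 : ‖w‖ < 1 := by simpa using hw
  have hq : ‖w‖ ^ 2 ≤ 1 := by nlinarith [norm_nonneg w]
  have hu : |inner ℝ e w| ≤ ‖w‖ := by simpa [he] using abs_real_inner_le_norm e w
  have huu := abs_le.1 (hu.trans hw1.le)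
  have hy₀ : x₀ + t • e + L w - x₀ =
      t • e + ((ρ / √2) • w + ((ρ / 4 - ρ / √2) * inner ℝ e w) • e) := by
    rw [hL]; abel
  have hyx : x₀ + t • e + L w - x =
      (t - r) • e + ((ρ / √2) • w + ((ρ / 4 - ρ / √2) * inner ℝ e w) • e) := by
    rw [hL, sub_smul, ← hxe]; abel
  have hn₀ := norm_sq_smul_add_stretch e w he t (ρ / 4) (ρ / √2)
  have hnx := norm_sq_smul_add_stretch e w he (t - r) (ρ / 4) (ρ / √2)
  rw [← hy₀, hτ2] at hn₀
  rw [← hyx, hτ2] at hnx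
  have hus : inner ℝ e w ^ 2 ≤ ‖w‖ ^ 2 := sq_le_sq.2 (by simpa using hu)
  set u : ℝ := inner ℝ e w
  have hτq : ρ ^ 2 / 2 * (‖w‖ ^ 2 - u ^ 2) ≤ ρ ^ 2 / 2 * (1 - u ^ 2) := by gcongr
  have hτq0 : 0 ≤ ρ ^ 2 / 2 * (‖w‖ ^ 2 - u ^ 2) :=
    mul_nonneg (by positivity) (sub_nonneg.2 hus)
  refine ⟨?_, ?_, ?_⟩
  · rw [mem_ball, dist_eq_norm]
    refine lt_of_pow_lt_pow_left₀ 2 hρ.le ?_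
    rw [hnx]
    exact (add_le_add_right hτq _).trans_lt
      (stretch_norm_sq_lt_ball hρ (abs_le.2 ⟨by linarith, htr⟩))
  · refine le_of_sq_le_sq ?_ (norm_nonneg _)
    rw [hn₀]
    have : P ≤ t + ρ / 4 * u := by nlinarith
    nlinarith
  · have hQ : ρ ≤ Q := by linarith
    refine lt_of_pow_lt_pow_left₀ 2 (by linarith) ?_
    rw [hn₀]
    exact (add_le_add_right hτq _).trans_lt
      (stretch_norm_sq_lt_outer hρ hQ (by linarith) htQ huu.1 huu.2)

/-- The volume of an annulus. -/
lemma volume_annulus {V : Type*} [NormedAddCommGroup V] [NormedSpace ℝ V]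
    [FiniteDimensional ℝ V] [Nontrivial V] [MeasurableSpace V] [BorelSpace V]
    (μ : Measure V) [μ.IsAddHaarMeasure] (x₀ : V) {P Q : ℝ} (hP : 0 ≤ P) (hPQ : P ≤ Q) :
    μ {y | P ≤ ‖y - x₀‖ ∧ ‖y - x₀‖ < Q} =
      ENNReal.ofReal (Q ^ finrank ℝ V - P ^ finrank ℝ V) * μ (ball 0 1) := by
  have hset : {y | P ≤ ‖y - x₀‖ ∧ ‖y - x₀‖ < Q} = ball x₀ Q \ ball x₀ P := by
    ext y
    simp [dist_eq_norm, and_comm]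
  rw [hset, measure_sdiff (ball_subset_ball hPQ) measurableSet_ball.nullMeasurableSet
    measure_ball_lt_top.ne, μ.addHaar_ball x₀ (hP.trans hPQ), μ.addHaar_ball x₀ hP,
    ENNReal.ofReal_sub _ (by positivity), ENNReal.sub_mul fun _ _ => measure_ball_lt_top.ne]

/-- A packing bound for `2ρ`-separated points in an annulus of width at least `ρ`. -/
lemma card_mul_le_of_separated_annulus {V : Type*} [NormedAddCommGroup V] [InnerProductSpace ℝ V]
    [FiniteDimensional ℝ V] [Nontrivial V] (x₀ : V) {P Q ρ : ℝ} (hP : 0 ≤ P) (hρ : 0 < ρ)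
    (hPQ : P + ρ ≤ Q) (F : Finset V) (hF : ∀ x ∈ F, P ≤ ‖x - x₀‖ ∧ ‖x - x₀‖ < Q)
    (hsep : ∀ x ∈ F, ∀ y ∈ F, x ≠ y → 2 * ρ ≤ ‖x - y‖) :
    (F.card : ℝ) * (ρ / 4 * (ρ / √2) ^ (finrank ℝ V - 1)) ≤
      Q ^ finrank ℝ V - P ^ finrank ℝ V := by
  borelize V
  let μ : Measure V := Measure.addHaar
  let A : Set V := {y | P ≤ ‖y - x₀‖ ∧ ‖y - x₀‖ < Q}
  have hA : MeasurableSet A :=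
    measurableSet_setOfPred.2 (by fun_prop)
  have hdisj : (F : Set V).PairwiseDisjoint fun x => ball x ρ ∩ A := fun x hx y hy hxy =>
    (ball_disjoint_ball (by rw [dist_eq_norm]; linarith [hsep x hx y hy hxy])).mono
      Set.inter_subset_left Set.inter_subset_left
  have hsum : ∑ x ∈ F, μ (ball x ρ ∩ A) ≤ μ A := by
    rw [← measure_biUnion_finset hdisj fun x _ => measurableSet_ball.inter hA]
    exact measure_mono (Set.iUnion₂_subset fun x _ => Set.inter_subset_right)
  have hcard := (Finset.card_nsmul_le_sum F _ _ fun x hx =>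
    volume_ball_inter_annulus_ge μ x x₀ hP hρ hPQ (hF x hx).1 (hF x hx).2).trans hsum
  rw [volume_annulus μ x₀ hP (by linarith), nsmul_eq_mul, ← mul_assoc,
    ENNReal.mul_le_mul_iff_left (measure_ball_pos μ 0 one_pos).ne' measure_ball_lt_top.ne,
    ← ENNReal.ofReal_natCast, ← ENNReal.ofReal_mul (Nat.cast_nonneg _)] at hcard
  refine (ENNReal.ofReal_le_ofReal_iff ?_).1 hcard
  exact sub_nonneg.2 (pow_le_pow_left₀ hP (by linarith) _)

lemma two_rpow_mul_semiaxes (d : ℕ) (hd : 1 ≤ d) (s : ℝ) :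
    (2 : ℝ) ^ ((3 * (d : ℝ) + 3) / 2) * (s / 2 / 4 * (s / 2 / √2) ^ (d - 1)) = s ^ d := by
  obtain ⟨k, rfl⟩ := Nat.exists_eq_add_of_le' hd
  have h2 : (2 : ℝ) ^ ((3 * ((k + 1 : ℕ) : ℝ) + 3) / 2) = 8 * (2 * √2) ^ k := by
    rw [show (3 * ((k + 1 : ℕ) : ℝ) + 3) / 2 = (3 : ℕ) + (1 + 1 / 2) * (k : ℕ) by push_cast; ring,
      Real.rpow_add two_pos, Real.rpow_natCast, Real.rpow_mul zero_le_two, Real.rpow_natCast,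
      Real.rpow_add two_pos, Real.rpow_one, ← Real.sqrt_eq_rpow]
    norm_num
  have hs : s = 2 * √2 * (s / 2 / √2) := by
    field_simp
  rw [h2, Nat.add_sub_cancel, pow_succ]
  conv_rhs => rw [hs, mul_pow, ← hs]
  ring


theorem annulus_point_count (d n : ℕ) (hd : 1 ≤ d) (hn : 1 ≤ n) (c C : ℝ) (hc : 0 < c)
    (hcC : c ≤ 2 * C) (Xn : Set (EuclideanSpace ℝ (Fin d)))
    (hsep : ∀ x ∈ Xn, ∀ y ∈ Xn, x ≠ y → c * (n : ℝ) ^ (-(1 : ℝ) / d) ≤ ‖x - y‖)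
    (x₀ : EuclideanSpace ℝ (Fin d)) (j : ℕ) (hj : 1 ≤ j) :
    ((Xn ∩ {y : EuclideanSpace ℝ (Fin d) |
        ((j : ℝ) - 1) * (C * (n : ℝ) ^ (-(1 : ℝ) / d)) ≤ ‖y - x₀‖ ∧
        ‖y - x₀‖ < (j : ℝ) * (C * (n : ℝ) ^ (-(1 : ℝ) / d))}).ncard : ℝ) ≤
      (2 : ℝ) ^ ((3 * (d : ℝ) + 3) / 2) * (C / c) ^ d * ((j : ℝ) ^ d - ((j : ℝ) - 1) ^ d) := by
  have : Nontrivial (EuclideanSpace ℝ (Fin d)) :=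
    nontrivial_of_finrank_pos (R := ℝ) (by rw [finrank_euclideanSpace_fin]; exact hd)
  have hC : 0 < C := by linarith
  have hj' : (1 : ℝ) ≤ j := by exact_mod_cast hj
  have hpow : 0 ≤ (j : ℝ) ^ d - ((j : ℝ) - 1) ^ d :=
    sub_nonneg.2 (pow_le_pow_left₀ (by linarith) (by linarith) _)
  have hm : 0 < (n : ℝ) ^ (-(1 : ℝ) / d) := Real.rpow_pos_of_pos (by exact_mod_cast hn) _
  set m := (n : ℝ) ^ (-(1 : ℝ) / d)
  set S := Xn ∩ {y : EuclideanSpace ℝ (Fin d) |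
    ((j : ℝ) - 1) * (C * m) ≤ ‖y - x₀‖ ∧ ‖y - x₀‖ < (j : ℝ) * (C * m)}
  rcases S.finite_or_infinite with hfin | hinf
  swap
  · rw [hinf.ncard]
    push_cast
    positivity
  have hcard := card_mul_le_of_separated_annulus x₀ (P := ((j : ℝ) - 1) * (C * m))
    (Q := j * (C * m)) (ρ := c * m / 2) (mul_nonneg (by linarith) (by positivity))
    (by positivity) (by nlinarith) hfin.toFinset
    (fun x hx => ((hfin.mem_toFinset).1 hx).2)
    (fun x hx y hy hxy => by
      linarith [hsep x ((hfin.mem_toFinset).1 hx).1 y ((hfin.mem_toFinset).1 hy).1 hxy])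
  rw [← Set.ncard_eq_toFinset_card S hfin, finrank_euclideanSpace_fin, mul_pow, mul_pow _ (C * m),
    ← sub_mul] at hcard
  have hcmd : 0 < (c * m) ^ d := by positivity
  refine le_of_mul_le_mul_right ?_ hcmd
  calc (S.ncard : ℝ) * (c * m) ^ d
      = 2 ^ ((3 * (d : ℝ) + 3) / 2) *
          (S.ncard * (c * m / 2 / 4 * (c * m / 2 / √2) ^ (d - 1))) := by
        rw [← two_rpow_mul_semiaxes d hd (c * m)]; ring
    _ ≤ 2 ^ ((3 * (d : ℝ) + 3) / 2) * (((j : ℝ) ^ d - ((j : ℝ) - 1) ^ d) * (C * m) ^ d) := by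
        gcongr
    _ = _ := by
        rw [div_pow, mul_pow, mul_pow]
        field_simp
end

section
/- Let d ≥ 1 and δ > 0, and let 𝒳 ⊂ ℝ^d be a set with separation radius δ, i.e., any two distinct points of 𝒳 are at Euclidean distance at least 2δ. Fix a center x₀ ∈ ℝ^d and for an integer j ≥ 1 let 𝒜_{δ,j} := {x ∈ ℝ^d : jδ ≤ |x − x₀| ≤ (j+1)δ} be the annulus of thickness δ and inner radius jδ. Then |𝒳 ∩ 𝒜_{δ,j}| ≤ 2d · j^{d−1} · e^{(5d−3)/(4j−1)}. -/
open MeasureTheory Metric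

/-- A slab through the center whose width is at least the radius of a ball contains at least half
of the volume of the ball. -/
theorem volume_ball_le_two_mul_slab {E : Type*} [NormedAddCommGroup E] [InnerProductSpace ℝ E]
    [FiniteDimensional ℝ E] [MeasurableSpace E] [BorelSpace E] {u : E} (hu : ‖u‖ = 1)
    {ρ p q : ℝ} (hp : 0 ≤ p) (hq : 0 ≤ q) (hpq : ρ ≤ p + q) :
    volume (ball (0 : E) ρ) ≤
      2 * volume (ball (0 : E) ρ ∩ {v | -p ≤ inner ℝ u v ∧ inner ℝ u v ≤ q}) := by
  set S := ball (0 : E) ρ ∩ {v | -p ≤ inner ℝ u v ∧ inner ℝ u v ≤ q}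
  set H := ball (0 : E) ρ ∩ {v | 0 ≤ inner ℝ u v}
  have hhalf : volume (ball (0 : E) ρ) ≤ 2 * volume H := by
    have hsub : ball (0 : E) ρ ⊆ H ∪ (fun v => -v) ⁻¹' H := by
      intro v hv
      rcases le_total 0 (inner ℝ u v) with h | h
      · exact Or.inl ⟨hv, h⟩
      · refine Or.inr ⟨by simpa using hv, ?_⟩
        simpa [inner_neg_right] using h
    calc volume (ball (0 : E) ρ) ≤ volume (H ∪ (fun v => -v) ⁻¹' H) := measure_mono hsub
      _ ≤ volume H + volume ((fun v => -v) ⁻¹' H) := measure_union_le _ _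
      _ = 2 * volume H := by
        rw [two_mul]; congr 1; exact Measure.measure_preimage_neg volume H
  have hslab : volume H ≤ volume S := by
    set P := {v : E | 0 ≤ inner ℝ u v} with hP
    have hPm : MeasurableSet P := by
      apply IsClosed.measurableSet
      exact isClosed_le (by fun_prop) (by fun_prop)
    have hsub : H ⊆ (S ∩ P) ∪ (fun v => q • u - v) ⁻¹' (S \ P) := by
      rintro v ⟨hv, h0⟩
      have h0 : 0 ≤ inner ℝ u v := h0
      rcases le_or_gt (inner ℝ u v) q with h | h
      · exact Or.inl ⟨⟨hv, by linarith, h⟩, h0⟩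
      · have hv : ‖v‖ < ρ := by simpa using hv
        have hin : inner ℝ u (q • u - v) = q - inner ℝ u v := by
          rw [inner_sub_right, inner_smul_right, real_inner_self_eq_norm_sq, hu]; ring
        have hle : inner ℝ u v ≤ ‖v‖ := by
          simpa [hu] using real_inner_le_norm u v
        have hnorm : ‖q • u - v‖ ≤ ‖v‖ := by
          apply le_of_sq_le_sq _ (norm_nonneg v)
          rw [norm_sub_sq_real, norm_smul, hu, real_inner_smul_left, Real.norm_of_nonneg hq]
          nlinarith
        refine Or.inr ⟨⟨by simpa using hnorm.trans_lt hv, ?_, ?_⟩, ?_⟩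
        · rw [hin]; linarith
        · rw [hin]; linarith
        · simp only [hP, Set.mem_ofPred_eq, hin]; linarith
    calc volume H ≤ volume ((S ∩ P) ∪ (fun v => q • u - v) ⁻¹' (S \ P)) := measure_mono hsub
      _ ≤ volume (S ∩ P) + volume ((fun v => q • u - v) ⁻¹' (S \ P)) := measure_union_le _ _
      _ = volume (S ∩ P) + volume (S \ P) := by
        congr 1
        exact (Measure.measurePreserving_sub_left volume (q • u)).measure_preimage_emb
          (MeasurableEquiv.subLeft (q • u)).measurableEmbedding _
      _ = volume S := measure_inter_add_sdiff S hPm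
  exact hhalf.trans (by gcongr)

/-- A ball centered in an annulus of thickness its own radius has at least half of its volume in
a slightly larger annulus. -/
theorem volume_ball_le_two_mul_annulus {E : Type*} [NormedAddCommGroup E] [InnerProductSpace ℝ E]
    [FiniteDimensional ℝ E] [MeasurableSpace E] [BorelSpace E] {w : E} {δ a b : ℝ}
    (hδ : 0 < δ) (ha : 0 < a) (hb : 0 ≤ b) (haw : a ≤ ‖w‖) (hwa : ‖w‖ ≤ a + δ)
    (hab : b ^ 2 = a ^ 2 + 2 * a * δ + 3 * δ ^ 2) :
    volume (ball (0 : E) δ) ≤ 2 * volume (ball w δ ∩ (closedBall 0 b \ ball 0 a)) := by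
  have hr : 0 < ‖w‖ := ha.trans_le haw
  set r := ‖w‖ with hrdef
  have hu : ‖r⁻¹ • w‖ = 1 := by
    rw [norm_smul, norm_inv, Real.norm_of_nonneg hr.le, inv_mul_cancel₀ hr.ne']
  have hp : 0 ≤ (r ^ 2 - a ^ 2) / (2 * r) := div_nonneg (by nlinarith) (by linarith)
  have hq : 0 ≤ (b ^ 2 - δ ^ 2 - r ^ 2) / (2 * r) := div_nonneg (by nlinarith) (by linarith)
  have hpq : δ ≤ (r ^ 2 - a ^ 2) / (2 * r) + (b ^ 2 - δ ^ 2 - r ^ 2) / (2 * r) := by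
    rw [← add_div, le_div_iff₀ (by linarith)]
    nlinarith
  refine (volume_ball_le_two_mul_slab hu hp hq hpq).trans ?_
  rw [← measure_preimage_add volume w (ball w δ ∩ (closedBall 0 b \ ball 0 a))]
  gcongr
  rintro v ⟨hv, h1, h2⟩
  have hv : ‖v‖ < δ := by simpa using hv
  have hvsq : ‖v‖ ^ 2 ≤ δ ^ 2 := by gcongr
  rw [real_inner_smul_left, inv_mul_eq_div] at h1 h2
  rw [div_le_div_iff₀ hr (by linarith)] at h2
  rw [← neg_div, div_le_div_iff₀ (by linarith) hr] at h1
  have h1 : a ^ 2 - r ^ 2 ≤ 2 * inner ℝ w v := by nlinarith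
  have h2 : 2 * inner ℝ w v ≤ b ^ 2 - δ ^ 2 - r ^ 2 := by nlinarith
  have hsq := norm_add_sq_real w v
  rw [← hrdef] at hsq
  refine ⟨by simpa using hv, ?_, ?_⟩
  · rw [mem_closedBall_zero_iff]
    exact le_of_sq_le_sq (by linarith) hb
  · rw [mem_ball_zero_iff, not_lt]
    exact le_of_sq_le_sq (by nlinarith [sq_nonneg ‖v‖]) (norm_nonneg _)

/-- Volume bound for the number of separated points in an annulus. -/
theorem card_mul_pow_le_of_separated_annulus {E : Type*} [NormedAddCommGroup E]
    [InnerProductSpace ℝ E] [FiniteDimensional ℝ E] [MeasurableSpace E] [BorelSpace E]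
    {δ a b : ℝ} (hδ : 0 < δ) (ha : 0 < a) (hb : 0 ≤ b)
    (hab : b ^ 2 = a ^ 2 + 2 * a * δ + 3 * δ ^ 2) (x₀ : E) (s : Finset E)
    (hsep : ∀ x ∈ s, ∀ y ∈ s, x ≠ y → 2 * δ ≤ ‖x - y‖)
    (hs : ∀ x ∈ s, a ≤ ‖x - x₀‖ ∧ ‖x - x₀‖ ≤ a + δ) :
    (s.card : ℝ) * δ ^ Module.finrank ℝ E ≤
      2 * (b ^ Module.finrank ℝ E - a ^ Module.finrank ℝ E) := by
  set A : Set E := closedBall 0 b \ ball 0 a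
  have hAm : MeasurableSet A := measurableSet_closedBall.diff measurableSet_ball
  have hle : a ≤ b := le_of_sq_le_sq (by nlinarith) hb
  have hdisj : Set.PairwiseDisjoint (s : Set E) (fun x => ball (x - x₀) δ ∩ A) := by
    intro x hx y hy hxy
    refine Set.disjoint_of_subset Set.inter_subset_left Set.inter_subset_left ?_
    apply ball_disjoint_ball
    rw [dist_sub_right, dist_eq_norm]
    linarith [hsep x hx y hy hxy]
  have hsum : ∑ x ∈ s, volume (ball (x - x₀) δ ∩ A) ≤ volume A := by
    rw [← measure_biUnion_finset hdisj fun x _ => measurableSet_ball.inter hAm]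
    exact measure_mono (Set.iUnion₂_subset fun _ _ => Set.inter_subset_right)
  have hcount : (s.card : ENNReal) * volume (ball (0 : E) δ) ≤ 2 * volume A := by
    calc (s.card : ENNReal) * volume (ball (0 : E) δ)
        = ∑ x ∈ s, volume (ball (0 : E) δ) := by simp
      _ ≤ ∑ x ∈ s, 2 * volume (ball (x - x₀) δ ∩ A) := Finset.sum_le_sum fun x hx =>
        volume_ball_le_two_mul_annulus hδ ha hb (hs x hx).1 (hs x hx).2 hab
      _ = 2 * ∑ x ∈ s, volume (ball (x - x₀) δ ∩ A) := by rw [Finset.mul_sum]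
      _ ≤ 2 * volume A := by gcongr
  have hfin : volume A ≠ ⊤ :=
    ((measure_mono Set.sdiff_subset).trans_lt measure_closedBall_lt_top).ne
  have hreal : (s.card : ℝ) * volume.real (ball (0 : E) δ) ≤ 2 * volume.real A := by
    have := ENNReal.toReal_mono (ENNReal.mul_ne_top (by simp) hfin) hcount
    simpa [Measure.real] using this
  have hdiff : volume.real A = volume.real (closedBall (0 : E) b) - volume.real (ball (0 : E) a) :=
    measureReal_sdiff (ball_subset_closedBall.trans (closedBall_subset_closedBall hle))
      measurableSet_ball measure_closedBall_lt_top.ne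
  have hunit : 0 < volume.real (ball (0 : E) 1) :=
    ENNReal.toReal_pos (measure_ball_pos _ _ one_pos).ne' measure_ball_lt_top.ne
  have hball {r : ℝ} (hr : 0 < r) : volume.real (ball (0 : E) r) =
      r ^ Module.finrank ℝ E * volume.real (ball (0 : E) 1) := by
    rw [measureReal_def, Measure.addHaar_ball_of_pos volume 0 hr, ENNReal.toReal_mul,
      ENNReal.toReal_ofReal (by positivity), measureReal_def]
  rw [hdiff, hball hδ, hball ha, Measure.addHaar_real_closedBall volume 0 hb] at hreal
  refine le_of_mul_le_mul_right ?_ hunit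
  linarith

theorem two_mul_pow_sub_pow_le {a j : ℝ} (hj : 0 ≤ j) (hja : j ≤ a) (n : ℕ) :
    2 * (a ^ (n + 2) - j ^ (n + 2)) ≤ (n + 2) * (a ^ 2 - j ^ 2) * a ^ n := by
  induction n with
  | zero => norm_num
  | succ n ih =>
    have ha := hj.trans hja
    have hpow : j ^ (n + 1) ≤ a ^ (n + 1) := by gcongr
    have hpow0 : 0 ≤ j ^ (n + 1) := by positivity
    have hstep : 2 * j ^ (n + 2) ≤ (a + j) * a ^ (n + 1) := by
      calc 2 * j ^ (n + 2) = (j + j) * j ^ (n + 1) := by ring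
        _ ≤ (a + j) * a ^ (n + 1) := by gcongr
    have h1 := mul_le_mul_of_nonneg_left ih ha
    have h2 := mul_le_mul_of_nonneg_left hstep (sub_nonneg.2 hja)
    push_cast
    calc 2 * (a ^ (n + 1 + 2) - j ^ (n + 1 + 2))
        = a * (2 * (a ^ (n + 2) - j ^ (n + 2))) + (a - j) * (2 * j ^ (n + 2)) := by ring
      _ ≤ a * ((n + 2) * (a ^ 2 - j ^ 2) * a ^ n) + (a - j) * ((a + j) * a ^ (n + 1)) :=
        add_le_add h1 h2
      _ = (n + 1 + 2) * (a ^ 2 - j ^ 2) * a ^ (n + 1) := by ring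

theorem two_mul_pow_sub_pow_le_exp {a j : ℝ} (hj : 1 ≤ j) (ha : 0 ≤ a)
    (haj : a ^ 2 = j ^ 2 + 2 * j + 3) (n : ℕ) :
    2 * (a ^ (n + 2) - j ^ (n + 2)) ≤
      2 * (n + 2) * j ^ (n + 1) * Real.exp ((5 * n + 7) / (4 * j - 1)) := by
  have hden : 0 < 4 * j - 1 := by linarith
  have hja : j ≤ a := le_of_sq_le_sq (by linarith) ha
  have hexp : a ≤ j * Real.exp (5 / (4 * j - 1)) := by
    refine le_of_sq_le_sq ?_ (by positivity)
    have hx : 5 / (2 * j) ≤ 2 * (5 / (4 * j - 1)) := by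
      rw [← mul_div_assoc, div_le_div_iff₀ (by linarith) hden]; linarith
    have hquad := Real.quadratic_le_exp_of_nonneg (x := 5 / (2 * j)) (by positivity)
    rw [haj, mul_pow, ← Real.exp_nat_mul]
    calc j ^ 2 + 2 * j + 3 ≤ j ^ 2 * (1 + 5 / (2 * j) + (5 / (2 * j)) ^ 2 / 2) := by
          have : j ^ 2 * (1 + 5 / (2 * j) + (5 / (2 * j)) ^ 2 / 2) = j ^ 2 + 5 / 2 * j + 25 / 8 := by
            field_simp; ring
          linarith
      _ ≤ j ^ 2 * Real.exp (((2 : ℕ) : ℝ) * (5 / (4 * j - 1))) := by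
          gcongr
          exact hquad.trans (Real.exp_le_exp.2 (by exact_mod_cast hx))
  have hlin : 2 * j + 3 ≤ 2 * j * Real.exp (7 / (4 * j - 1)) := by
    have h1 := Real.add_one_le_exp (7 / (4 * j - 1))
    have h2 : 3 / (2 * j) ≤ 7 / (4 * j - 1) := by
      rw [div_le_div_iff₀ (by linarith) hden]; linarith
    calc 2 * j + 3 = 2 * j * (3 / (2 * j) + 1) := by field_simp; ring
      _ ≤ 2 * j * Real.exp (7 / (4 * j - 1)) := by gcongr; linarith
  calc 2 * (a ^ (n + 2) - j ^ (n + 2)) ≤ (n + 2) * (a ^ 2 - j ^ 2) * a ^ n :=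
        two_mul_pow_sub_pow_le (by linarith) hja n
    _ = (n + 2) * (2 * j + 3) * a ^ n := by rw [haj]; ring
    _ ≤ (n + 2) * (2 * j * Real.exp (7 / (4 * j - 1))) * (j * Real.exp (5 / (4 * j - 1))) ^ n := by
        gcongr
    _ = 2 * (n + 2) * j ^ (n + 1) * Real.exp ((5 * n + 7) / (4 * j - 1)) := by
        rw [mul_pow, ← Real.exp_nat_mul,
          show (5 * n + 7) / (4 * j - 1) = 7 / (4 * j - 1) + n * (5 / (4 * j - 1)) by ring,
          Real.exp_add]
        ring

theorem narcowich_ward_improved (d : ℕ) (hd : 1 ≤ d) (δ : ℝ) (hδ : 0 < δ)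
    (𝒳 : Set (EuclideanSpace ℝ (Fin d)))
    (hsep : ∀ x ∈ 𝒳, ∀ y ∈ 𝒳, x ≠ y → 2 * δ ≤ ‖x - y‖)
    (x₀ : EuclideanSpace ℝ (Fin d)) (j : ℕ) (hj : 1 ≤ j) :
    ((𝒳 ∩ {x : EuclideanSpace ℝ (Fin d) |
        (j : ℝ) * δ ≤ ‖x - x₀‖ ∧ ‖x - x₀‖ ≤ ((j : ℝ) + 1) * δ}).ncard : ℝ) ≤
      2 * (d : ℝ) * (j : ℝ) ^ (d - 1) *
        Real.exp ((5 * (d : ℝ) - 3) / (4 * (j : ℝ) - 1)) := by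
  set T := 𝒳 ∩ {x : EuclideanSpace ℝ (Fin d) |
    (j : ℝ) * δ ≤ ‖x - x₀‖ ∧ ‖x - x₀‖ ≤ ((j : ℝ) + 1) * δ}
  have hj' : (1 : ℝ) ≤ j := by exact_mod_cast hj
  by_cases hfin : T.Finite
  swap
  · rw [Set.Infinite.ncard hfin, Nat.cast_zero]
    positivity
  set a := √((j : ℝ) ^ 2 + 2 * j + 3)
  have ha0 : 0 ≤ a := Real.sqrt_nonneg _
  have hasq : a ^ 2 = (j : ℝ) ^ 2 + 2 * j + 3 := Real.sq_sqrt (by positivity)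
  have hcard : (T.ncard : ℝ) ≤ 2 * (a ^ d - (j : ℝ) ^ d) := by
    have h := card_mul_pow_le_of_separated_annulus hδ (a := j * δ) (b := a * δ) (by positivity)
      (by positivity) (by rw [mul_pow, hasq]; ring) x₀ hfin.toFinset
      (fun x hx y hy => hsep x ((hfin.mem_toFinset.1 hx).1) y ((hfin.mem_toFinset.1 hy).1))
      (fun x hx => by
        have := (hfin.mem_toFinset.1 hx).2
        exact ⟨this.1, this.2.trans_eq (by ring)⟩)
    rw [finrank_euclideanSpace_fin, ← Set.ncard_eq_toFinset_card T hfin] at h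
    refine le_of_mul_le_mul_right (h.trans_eq ?_) (pow_pos hδ d)
    ring
  clear_value T
  generalize T.ncard = N at hcard ⊢
  clear! 𝒳 T x₀
  match d, hd with
  | 1, _ =>
    have hlt : (N : ℝ) < 3 := by
      have : a < j + 3 / 2 := lt_of_pow_lt_pow_left₀ 2 (by positivity) (by nlinarith)
      simp only [pow_one] at hcard
      linarith
    have hle : (N : ℝ) ≤ 2 := by
      have : N < 3 := by exact_mod_cast hlt
      exact_mod_cast Nat.le_of_lt_succ this
    have hexp : 1 ≤ Real.exp ((5 * ((1 : ℕ) : ℝ) - 3) / (4 * (j : ℝ) - 1)) :=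
      Real.one_le_exp (div_nonneg (by norm_num) (by linarith))
    simp only [Nat.sub_self, pow_zero]
    push_cast at hexp ⊢
    linarith
  | n + 2, _ =>
    refine (hcard.trans (two_mul_pow_sub_pow_le_exp hj' ha0 hasq n)).trans_eq ?_
    rw [show n + 2 - 1 = n + 1 by omega]
    push_cast
    ring_nf
end

section
/- Let d ≥ 1 and 0 < r ≤ R. Then for every point q ∈ ℝ^d with |q| ≤ R, the Lebesgue measure of the intersection of the closed ball of radius R centered at the origin with the closed ball of radius r centered at q satisfies vol(B̄(0,R) ∩ B̄(q,r)) ≥ (π^{(d−1)/2} r^d / Γ((d+1)/2)) · ∫_0^A sin^d t dt, where A := arccos(r/(2R)). -/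
open Metric MeasureTheory

/-- The volume of a closed ball in `ℝⁿ`, including the case `n = 0`. -/
theorem EuclideanSpace.volume_closedBall_fin (n : ℕ) (x : EuclideanSpace ℝ (Fin n)) {ρ : ℝ}
    (hρ : 0 ≤ ρ) :
    volume (closedBall x ρ) =
      ENNReal.ofReal (√Real.pi ^ n / Real.Gamma ((n : ℝ) / 2 + 1) * ρ ^ n) := by
  rcases Nat.eq_zero_or_pos n with rfl | hn
  · have hx : (0 : EuclideanSpace ℝ (Fin 0)) ∈ closedBall x ρ := by
      rw [Subsingleton.elim x 0]
      exact mem_closedBall_self hρ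
    rw [volume_euclideanSpace_eq_dirac, Measure.dirac_apply_of_mem hx]
    simp
  · have : Nonempty (Fin n) := ⟨⟨0, hn⟩⟩
    rw [EuclideanSpace.volume_closedBall, Fintype.card_fin, mul_comm,
      ENNReal.ofReal_mul (by positivity), ENNReal.ofReal_pow hρ]

/-- Integrating over slices orthogonal to the first axis bounds the volume of a spherical cap
from below. -/
theorem EuclideanSpace.le_volume_cap (n : ℕ) {r h : ℝ} (hr : 0 ≤ r) (hh : -r ≤ h) (hhr : h ≤ r) :
    ENNReal.ofReal (∫ t in h..r,
        √Real.pi ^ n / Real.Gamma ((n : ℝ) / 2 + 1) * √(r ^ 2 - t ^ 2) ^ n) ≤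
      volume {y : EuclideanSpace ℝ (Fin (n + 1)) | ‖y‖ ≤ r ∧ h ≤ y 0} := by
  let T : Set (ℝ × (Fin n → ℝ)) := {p | p.1 ^ 2 + ∑ j, p.2 j ^ 2 ≤ r ^ 2 ∧ h ≤ p.1}
  have hT : MeasurableSet T := by
    rw [show T = {p | p.1 ^ 2 + ∑ j, p.2 j ^ 2 ≤ r ^ 2} ∩ {p | h ≤ p.1} from rfl]
    exact (measurableSet_le (by fun_prop) (by fun_prop)).inter
      (measurableSet_le (by fun_prop) (by fun_prop))
  have hmp := (volume_preserving_piFinSuccAbove (fun _ : Fin (n + 1) => ℝ) 0).comp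
    (PiLp.volume_preserving_ofLp (Fin (n + 1)))
  have hpre : {y : EuclideanSpace ℝ (Fin (n + 1)) | ‖y‖ ≤ r ∧ h ≤ y 0} =
      (MeasurableEquiv.piFinSuccAbove (fun _ : Fin (n + 1) => ℝ) 0 ∘ WithLp.ofLp) ⁻¹' T := by
    ext y
    have hy : ‖y‖ ≤ r ↔ y 0 ^ 2 + ∑ j : Fin n, y j.succ ^ 2 ≤ r ^ 2 := by
      rw [← sq_le_sq₀ (norm_nonneg y) hr, EuclideanSpace.real_norm_sq_eq, Fin.sum_univ_succ]
    simp only [Set.mem_ofPred_eq, hy]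
    rfl
  have hslice : ∀ t ∈ Set.Ioc h r,
      ENNReal.ofReal (√Real.pi ^ n / Real.Gamma ((n : ℝ) / 2 + 1) * √(r ^ 2 - t ^ 2) ^ n) =
        volume (Prod.mk t ⁻¹' T) := by
    intro t ht
    have ht2 : 0 ≤ r ^ 2 - t ^ 2 := by nlinarith [ht.1, ht.2]
    rw [← EuclideanSpace.volume_closedBall_fin n 0 (Real.sqrt_nonneg _),
      ← (PiLp.volume_preserving_toLp (Fin n)).measure_preimage
        measurableSet_closedBall.nullMeasurableSet]
    congr 1
    ext z
    simp only [Set.mem_preimage, mem_closedBall_zero_iff, T, Set.mem_ofPred_eq, ht.1.le, and_true]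
    rw [← sq_le_sq₀ (norm_nonneg _) (Real.sqrt_nonneg _), Real.sq_sqrt ht2,
      EuclideanSpace.real_norm_sq_eq, le_sub_iff_add_le']
  rw [hpre, hmp.measure_preimage hT.nullMeasurableSet, Measure.volume_eq_prod,
    Measure.prod_apply hT, intervalIntegral.integral_of_le hhr,
    ofReal_integral_eq_lintegral_ofReal]
  · rw [setLIntegral_congr_fun measurableSet_Ioc hslice]
    exact setLIntegral_le_lintegral _ _
  · exact (Continuous.integrableOn_Icc (by fun_prop)).mono_set Set.Ioc_subset_Icc_self
  · exact Filter.Eventually.of_forall fun t => by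
      have := Real.Gamma_pos_of_pos (show (0 : ℝ) < (n : ℝ) / 2 + 1 by positivity)
      positivity

/-- The substitution `t = r cos θ`. -/
theorem integral_sqrt_sq_sub_sq_pow (n : ℕ) {r A : ℝ} (hr : 0 ≤ r) (hA : 0 ≤ A)
    (hAπ : A ≤ Real.pi) :
    ∫ t in (r * Real.cos A)..r, √(r ^ 2 - t ^ 2) ^ n =
      r ^ (n + 1) * ∫ θ in (0 : ℝ)..A, Real.sin θ ^ (n + 1) := by
  have hsub := intervalIntegral.integral_comp_mul_deriv (a := 0) (b := A)
    (f := fun θ => r * Real.cos θ) (f' := fun θ => r * -Real.sin θ)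
    (g := fun t => √(r ^ 2 - t ^ 2) ^ n)
    (fun θ _ => (Real.hasDerivAt_cos θ).const_mul r) (by fun_prop) (by fun_prop)
  simp only [Real.cos_zero, mul_one] at hsub
  rw [intervalIntegral.integral_symm, ← hsub, ← intervalIntegral.integral_neg,
    ← intervalIntegral.integral_const_mul]
  refine intervalIntegral.integral_congr fun θ hθ => ?_
  rw [Set.uIcc_of_le hA] at hθ
  have hsin : 0 ≤ Real.sin θ := Real.sin_nonneg_of_nonneg_of_le_pi hθ.1 (hθ.2.trans hAπ)
  have hsqrt : √(r ^ 2 - (r * Real.cos θ) ^ 2) = r * Real.sin θ := by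
    rw [← Real.sqrt_sq (mul_nonneg hr hsin)]
    congr 1
    linear_combination -r ^ 2 * Real.sin_sq_add_cos_sq θ
  simp only [Function.comp_apply, hsqrt]
  ring

/-- The intersection of the two balls contains an isometric copy of the cap cut off from the ball
of radius `r` at distance `r ^ 2 / (2 * R)` from its centre. -/
theorem volume_cap_le_volume_inter_closedBall (n : ℕ) {r R : ℝ} (hr : 0 < r) (hrR : r ≤ R)
    (q : EuclideanSpace ℝ (Fin (n + 1))) (hq : ‖q‖ ≤ R) :
    volume {y : EuclideanSpace ℝ (Fin (n + 1)) | ‖y‖ ≤ r ∧ r ^ 2 / (2 * R) ≤ y 0} ≤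
      volume (closedBall (0 : EuclideanSpace ℝ (Fin (n + 1))) R ∩ closedBall q r) := by
  have hR : 0 < R := hr.trans_le hrR
  obtain ⟨u, hu, hqu⟩ : ∃ u : EuclideanSpace ℝ (Fin (n + 1)), ‖u‖ = 1 ∧ q = -(‖q‖ • u) := by
    rcases eq_or_ne q 0 with rfl | hq0
    · exact ⟨EuclideanSpace.single 0 1, by simp, by simp⟩
    · have hq' : ‖q‖ ≠ 0 := norm_ne_zero_iff.2 hq0
      exact ⟨-(‖q‖⁻¹ • q), by simp [norm_smul, hq'], by simp [smul_smul, hq']⟩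
  obtain ⟨b, hb⟩ := Orthonormal.exists_orthonormalBasis_extension_of_card_eq (𝕜 := ℝ)
    (E := EuclideanSpace ℝ (Fin (n + 1))) (ι := Fin (n + 1)) (by simp)
    (v := fun _ => u) (s := {0}) (by
      refine ⟨fun i => hu, fun i j hij => ?_⟩
      exact absurd (Subsingleton.elim i j) hij)
  have hb0 : b 0 = u := hb 0 rfl
  have hmp : MeasurePreserving (fun x : EuclideanSpace ℝ (Fin (n + 1)) => b.repr (x - q)) :=
    b.measurePreserving_repr.comp (measurePreserving_sub_right volume q)
  have hmeas : MeasurableSet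
      {y : EuclideanSpace ℝ (Fin (n + 1)) | ‖y‖ ≤ r ∧ r ^ 2 / (2 * R) ≤ y 0} := by
    rw [Set.ofPred_and]
    exact (measurableSet_le (by fun_prop) (by fun_prop)).inter
      (measurableSet_le (by fun_prop) (by fun_prop))
  rw [← hmp.measure_preimage hmeas.nullMeasurableSet]
  refine measure_mono fun x hx => ?_
  obtain ⟨hx1, hx2⟩ := hx
  rw [LinearIsometryEquiv.norm_map] at hx1
  rw [b.repr_apply_apply, hb0] at hx2
  refine ⟨?_, by rwa [mem_closedBall_iff_norm]⟩
  rw [mem_closedBall_zero_iff, ← sq_le_sq₀ (norm_nonneg x) hR.le]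
  have hexp : ‖x‖ ^ 2 = ‖x - q‖ ^ 2 - 2 * ‖q‖ * inner ℝ u (x - q) + ‖q‖ ^ 2 := by
    have hinner : inner ℝ (x - q) q = -(‖q‖ * inner ℝ u (x - q)) := by
      conv_lhs => arg 3; rw [hqu]
      rw [inner_neg_right, inner_smul_right, real_inner_comm]
    have := norm_add_sq_real (x - q) q
    rw [sub_add_cancel, hinner] at this
    linarith
  rw [div_le_iff₀ (by positivity)] at hx2
  set c : ℝ := inner ℝ u (x - q)
  have hsq : ‖x - q‖ ^ 2 ≤ r ^ 2 := pow_le_pow_left₀ (norm_nonneg _) hx1 2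
  have hrR2 : r ^ 2 ≤ R ^ 2 := pow_le_pow_left₀ hr.le hrR 2
  rw [hexp]
  -- The right-hand side is convex in `‖q‖`, so only `‖q‖ = 0` and `‖q‖ = R` matter.
  have hs := norm_nonneg q
  refine le_of_mul_le_mul_left ?_ hR
  nlinarith [mul_le_mul_of_nonneg_left hx2 hs, mul_nonneg hs (sub_nonneg.2 hq),
    mul_nonneg (mul_nonneg hs (sub_nonneg.2 hq)) hR.le,
    mul_nonneg (sub_nonneg.2 hq) (sub_nonneg.2 hrR2), mul_nonneg hR.le (sub_nonneg.2 hsq)]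

theorem ball_intersection_volume_lower_bound (d : ℕ) (hd : 1 ≤ d) (r R : ℝ) (hr : 0 < r)
    (hrR : r ≤ R) (q : EuclideanSpace ℝ (Fin d)) (hq : ‖q‖ ≤ R) :
    Real.pi ^ (((d : ℝ) - 1) / 2) * r ^ d / Real.Gamma (((d : ℝ) + 1) / 2) *
        ∫ t in (0 : ℝ)..(Real.arccos (r / (2 * R))), Real.sin t ^ d ≤
      (volume (closedBall (0 : EuclideanSpace ℝ (Fin d)) R ∩ closedBall q r)).toReal := by
  obtain ⟨n, rfl⟩ := Nat.exists_eq_add_of_le' hd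
  have hR : 0 < R := hr.trans_le hrR
  have hratio : r / (2 * R) ≤ 1 := by
    rw [div_le_one (by positivity)]
    linarith
  have hratio' : 0 ≤ r / (2 * R) := by positivity
  have hcap : r * (r / (2 * R)) = r ^ 2 / (2 * R) := by ring
  have hvol := (EuclideanSpace.le_volume_cap n hr.le (h := r ^ 2 / (2 * R))
    (by rw [← hcap]; nlinarith) (by rw [← hcap]; nlinarith)).trans
      (volume_cap_le_volume_inter_closedBall n hr hrR q hq)
  have hfin : volume (closedBall (0 : EuclideanSpace ℝ (Fin (n + 1))) R ∩ closedBall q r) ≠ ⊤ :=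
    measure_ne_top_of_subset Set.inter_subset_left measure_closedBall_lt_top.ne
  have hsub := integral_sqrt_sq_sub_sq_pow n hr.le (Real.arccos_nonneg (r / (2 * R)))
    (Real.arccos_le_pi _)
  rw [Real.cos_arccos (by linarith) hratio, hcap] at hsub
  rw [ENNReal.ofReal_le_iff_le_toReal hfin, intervalIntegral.integral_const_mul, hsub] at hvol
  refine le_of_eq_of_le ?_ hvol
  have hpi : Real.pi ^ ((((n + 1 : ℕ) : ℝ) - 1) / 2) = √Real.pi ^ n := by
    rw [Real.sqrt_eq_rpow, ← Real.rpow_mul_natCast Real.pi_pos.le]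
    congr 1
    push_cast
    ring
  have hGamma : (((n + 1 : ℕ) : ℝ) + 1) / 2 = (n : ℝ) / 2 + 1 := by
    push_cast
    ring
  rw [hpi, hGamma]
  ring
end

section
/- Let d ≥ 1 and 0 < r ≤ R. Let e₁ denote the first standard basis vector of ℝ^d and set x̃ := r²/(2R). Then the Lebesgue measure of the intersection of the closed ball of radius r centered at the origin with the closed ball of radius R centered at R·e₁ equals vol(B̄(0,r) ∩ B̄(R·e₁, R)) = ∫_0^{x̃} V_{d−1}(√(2Rx − x²)) dx + ∫_{x̃}^{r} V_{d−1}(√(r² − x²)) dx, where V_{d−1}(t) := π^{(d−1)/2} t^{d−1} / Γ((d+1)/2) is the volume of a (d−1)-dimensional ball of radius t. -/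
open Metric MeasureTheory

/-- The volume of a Euclidean ball of radius `√s` in `ℝ^n`, including `n = 0`. -/
lemma volume_sum_sq_le (n : ℕ) {s : ℝ} (hs : 0 ≤ s) :
    volume {z : Fin n → ℝ | ∑ i, z i ^ 2 ≤ s} =
      ENNReal.ofReal (Real.pi ^ ((n : ℝ) / 2) * √s ^ n / Real.Gamma ((n : ℝ) / 2 + 1)) := by
  have hball : {z : Fin n → ℝ | ∑ i, z i ^ 2 ≤ s} =
      WithLp.toLp 2 ⁻¹' closedBall (0 : EuclideanSpace ℝ (Fin n)) √s := by
    ext z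
    simp [EuclideanSpace.norm_eq, Real.sqrt_le_sqrt_iff hs]
  rcases Nat.eq_zero_or_pos n with rfl | hn
  · simp [hs, volume_pi]
  · have : Nonempty (Fin n) := ⟨⟨0, hn⟩⟩
    rw [hball, (PiLp.volume_preserving_toLp (Fin n)).measure_preimage
      measurableSet_closedBall.nullMeasurableSet, EuclideanSpace.volume_closedBall,
      ← ENNReal.ofReal_pow (Real.sqrt_nonneg s), ← ENNReal.ofReal_mul (by positivity)]
    congr 1
    rw [Fintype.card_fin, Real.sqrt_eq_rpow Real.pi, ← Real.rpow_natCast (Real.pi ^ (1 / 2 : ℝ)) n,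
      ← Real.rpow_mul Real.pi_pos.le]
    ring_nf

/-- The volume of a region whose slices orthogonal to the first axis are balls of
squared radius `g x`, empty for `x` outside `[a, b]`. -/
lemma volume_toReal_sum_sq_le_slices (n : ℕ) {g : ℝ → ℝ} (hg : Continuous g) {a b : ℝ}
    (hab : a ≤ b) (hpos : ∀ x ∈ Set.Icc a b, 0 ≤ g x) (hneg : ∀ x ∉ Set.Icc a b, g x < 0) :
    (volume {y : Fin (n + 1) → ℝ | ∑ i : Fin n, y i.succ ^ 2 ≤ g (y 0)}).toReal =
      ∫ x in a..b, Real.pi ^ ((n : ℝ) / 2) * √(g x) ^ n / Real.Gamma ((n : ℝ) / 2 + 1) := by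
  have hmeas : MeasurableSet {p : ℝ × (Fin n → ℝ) | ∑ i, p.2 i ^ 2 ≤ g p.1} :=
    (isClosed_le (by fun_prop) (by fun_prop)).measurableSet
  have hpre : {y : Fin (n + 1) → ℝ | ∑ i : Fin n, y i.succ ^ 2 ≤ g (y 0)} =
      MeasurableEquiv.piFinSuccAbove (fun _ => ℝ) 0 ⁻¹'
        {p : ℝ × (Fin n → ℝ) | ∑ i, p.2 i ^ 2 ≤ g p.1} := by
    ext y
    simp [MeasurableEquiv.piFinSuccAbove, Fin.insertNthEquiv, Fin.tail]
  have hslice : ∀ x, volume (Prod.mk x ⁻¹' {p : ℝ × (Fin n → ℝ) | ∑ i, p.2 i ^ 2 ≤ g p.1}) =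
      (Set.Icc a b).indicator (fun x => ENNReal.ofReal
        (Real.pi ^ ((n : ℝ) / 2) * √(g x) ^ n / Real.Gamma ((n : ℝ) / 2 + 1))) x := by
    intro x
    by_cases hx : x ∈ Set.Icc a b
    · rw [Set.indicator_of_mem hx, ← volume_sum_sq_le n (hpos x hx)]
      rfl
    · rw [Set.indicator_of_notMem hx]
      convert measure_empty (μ := (volume : Measure (Fin n → ℝ)))
      ext z
      simpa using (hneg x hx).trans_le (Finset.sum_nonneg fun i _ => sq_nonneg (z i))
  rw [hpre, (volume_preserving_piFinSuccAbove (fun _ => ℝ) 0).measure_preimage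
    hmeas.nullMeasurableSet, Measure.volume_eq_prod, Measure.prod_apply hmeas,
    lintegral_congr hslice, lintegral_indicator measurableSet_Icc,
    intervalIntegral.integral_of_le hab, ← integral_Icc_eq_integral_Ioc,
    integral_eq_lintegral_of_nonneg_ae]
  · refine Filter.Eventually.of_forall fun x => ?_
    have := Real.Gamma_pos_of_pos (show (0 : ℝ) < (n : ℝ) / 2 + 1 by positivity)
    simp only [Pi.zero_apply]
    positivity
  · exact Continuous.aestronglyMeasurable (by fun_prop)

theorem lens_volume_slicing (d : ℕ) (hd : 0 < d) (r R : ℝ) (hr : 0 < r) (hrR : r ≤ R) :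
    (volume (closedBall (0 : EuclideanSpace ℝ (Fin d)) r ∩
        closedBall (EuclideanSpace.single (⟨0, hd⟩ : Fin d) R) R)).toReal =
      (∫ x in (0 : ℝ)..(r ^ 2 / (2 * R)),
          Real.pi ^ (((d : ℝ) - 1) / 2) * Real.sqrt (2 * R * x - x ^ 2) ^ (d - 1) /
            Real.Gamma (((d : ℝ) + 1) / 2)) +
      ∫ x in (r ^ 2 / (2 * R))..r,
          Real.pi ^ (((d : ℝ) - 1) / 2) * Real.sqrt (r ^ 2 - x ^ 2) ^ (d - 1) /
            Real.Gamma (((d : ℝ) + 1) / 2) := by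
  obtain ⟨n, rfl⟩ : ∃ n, d = n + 1 := ⟨d - 1, by omega⟩
  have hR : 0 < R := hr.trans_le hrR
  let g : ℝ → ℝ := fun x => min (2 * R * x - x ^ 2) (r ^ 2 - x ^ 2)
  have hg : Continuous g := by fun_prop
  have hlens : WithLp.toLp 2 ⁻¹' (closedBall (0 : EuclideanSpace ℝ (Fin (n + 1))) r ∩
      closedBall (EuclideanSpace.single (⟨0, hd⟩ : Fin (n + 1)) R) R) =
      {y : Fin (n + 1) → ℝ | ∑ i : Fin n, y i.succ ^ 2 ≤ g (y 0)} := by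
    ext y
    have h0 : (⟨0, hd⟩ : Fin (n + 1)) = 0 := rfl
    simp only [h0, Set.mem_preimage, Set.mem_inter_iff, mem_closedBall, EuclideanSpace.dist_eq,
      Real.sqrt_le_left hr.le, Real.sqrt_le_left hR.le, Fin.sum_univ_succ, Real.dist_eq, sq_abs,
      Set.mem_ofPred_eq, g, le_min_iff]
    simp only [PiLp.zero_apply, sub_zero, PiLp.single_apply, if_true, Fin.succ_ne_zero, if_false]
    constructor <;> rintro ⟨h1, h2⟩ <;> constructor <;> linarith
  have hx_nonneg : 0 ≤ r ^ 2 / (2 * R) := by positivity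
  have hx_le : r ^ 2 / (2 * R) ≤ r := by
    rw [div_le_iff₀ (by positivity)]
    nlinarith
  have hpos : ∀ x ∈ Set.Icc 0 r, 0 ≤ g x := fun x hx =>
    le_min (by nlinarith [hx.1, hx.2]) (by nlinarith [hx.1, hx.2])
  have hneg : ∀ x ∉ Set.Icc 0 r, g x < 0 := by
    intro x hx
    rcases lt_or_ge x 0 with h | h
    · exact min_lt_of_left_lt (by nlinarith)
    · have hrx : r < x := not_le.mp fun h' => hx ⟨h, h'⟩
      exact min_lt_of_right_lt (by nlinarith)
  have hint : Continuous fun x =>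
      Real.pi ^ ((n : ℝ) / 2) * √(g x) ^ n / Real.Gamma ((n : ℝ) / 2 + 1) := by fun_prop
  have hdim : ((n + 1 : ℕ) : ℝ) - 1 = n := by push_cast; ring
  have hGamma : (((n + 1 : ℕ) : ℝ) + 1) / 2 = (n : ℝ) / 2 + 1 := by push_cast; ring
  rw [← (PiLp.volume_preserving_toLp (Fin (n + 1))).measure_preimage
    (measurableSet_closedBall.inter measurableSet_closedBall).nullMeasurableSet, hlens,
    volume_toReal_sum_sq_le_slices n hg hr.le hpos hneg,
    ← intervalIntegral.integral_add_adjacent_intervals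
      (hint.intervalIntegrable 0 (r ^ 2 / (2 * R))) (hint.intervalIntegrable _ _),
    hdim, hGamma, Nat.add_sub_cancel]
  congr 1 <;> refine intervalIntegral.integral_congr fun x hx => ?_
  · rw [Set.uIcc_of_le hx_nonneg] at hx
    have := (le_div_iff₀ (by positivity)).mp hx.2
    have hgx : g x = 2 * R * x - x ^ 2 := min_eq_left (by linarith)
    simp only [hgx]
  · rw [Set.uIcc_of_le hx_le] at hx
    have := (div_le_iff₀ (by positivity)).mp hx.1
    have hgx : g x = r ^ 2 - x ^ 2 := min_eq_right (by linarith)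
    simp only [hgx]
end

section
/- Let d ≥ 1, let 0 < δ ≤ R and 0 < ρ ≤ δ, and let 𝒜 := {x ∈ ℝ^d : R − δ ≤ |x| ≤ R} be the closed annulus with outer radius R and thickness δ. Then for every q ∈ 𝒜 and every p ∈ ℝ^d with |p| = R, vol(𝒜 ∩ B̄(q, ρ)) ≥ vol(B̄(0,R) ∩ B̄(p, ρ)); that is, the minimal measure of the intersection of 𝒜 with a closed ball of radius ρ centered at a point of 𝒜 is attained when the ball is centered at a point of the outer boundary sphere. -/
open Metric MeasureTheory

/-- Slices parallel to the axis through the centre: at squared distance `w` from the axis, the slice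
of the lens is no longer than the slice of the annulus intersected with the ball. -/
theorem volume_lens_slice_le_volume_annulus_slice {R h ρ t w : ℝ} (hh : 0 ≤ h) (hρ : 0 ≤ ρ)
    (hhR : h + ρ ≤ R) (hht : h ≤ t) (htR : t ≤ R) (hw : 0 ≤ w) :
    volume {s : ℝ | s ^ 2 + w ≤ R ^ 2 ∧ (s - R) ^ 2 + w ≤ ρ ^ 2} ≤
      volume {s : ℝ | (h ^ 2 ≤ s ^ 2 + w ∧ s ^ 2 + w ≤ R ^ 2) ∧ (s - t) ^ 2 + w ≤ ρ ^ 2} := by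
  by_cases hwρ : w ≤ ρ ^ 2
  · have hK : √(R ^ 2 - w) ^ 2 = R ^ 2 - w := Real.sq_sqrt (by nlinarith)
    have hk : √(ρ ^ 2 - w) ^ 2 = ρ ^ 2 - w := Real.sq_sqrt (by linarith)
    have hH : h ^ 2 - w ≤ √(h ^ 2 - w) ^ 2 := by
      rw [Real.sq_sqrt']
      exact le_max_left _ _
    have hKR : √(R ^ 2 - w) ≤ R := Real.sqrt_le_iff.2 ⟨by linarith, by linarith⟩
    have hkρ : √(ρ ^ 2 - w) ≤ ρ := Real.sqrt_le_iff.2 ⟨hρ, by linarith⟩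
    have hHh : √(h ^ 2 - w) ≤ h := Real.sqrt_le_iff.2 ⟨hh, by linarith⟩
    have hK0 := Real.sqrt_nonneg (R ^ 2 - w)
    have hk0 := Real.sqrt_nonneg (ρ ^ 2 - w)
    have hH0 := Real.sqrt_nonneg (h ^ 2 - w)
    set K := √(R ^ 2 - w)
    set k := √(ρ ^ 2 - w)
    set H := √(h ^ 2 - w)
    calc volume {s : ℝ | s ^ 2 + w ≤ R ^ 2 ∧ (s - R) ^ 2 + w ≤ ρ ^ 2}
        ≤ volume (Set.Icc (R - k) K) := by
          refine measure_mono fun s ⟨hs₁, hs₂⟩ => ⟨?_, ?_⟩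
          · linarith [(abs_le_of_sq_le_sq' (by linarith : (s - R) ^ 2 ≤ k ^ 2) hk0).1]
          · exact (abs_le_of_sq_le_sq' (by linarith : s ^ 2 ≤ K ^ 2) hK0).2
      _ ≤ volume (Set.Icc (max (t - k) H) (min (t + k) K)) := by
          rw [Real.volume_Icc, Real.volume_Icc]
          refine ENNReal.ofReal_le_ofReal ?_
          rcases max_choice (t - k) H with h₁ | h₁ <;>
            rcases min_choice (t + k) K with h₂ | h₂ <;> rw [h₁, h₂] <;> linarith
      _ ≤ _ := by
          refine measure_mono fun s ⟨hs₁, hs₂⟩ => ?_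
          obtain ⟨hs₁, hs₃⟩ := max_le_iff.1 hs₁
          obtain ⟨hs₂, hs₄⟩ := le_min_iff.1 hs₂
          have e₁ : H ^ 2 ≤ s ^ 2 := pow_le_pow_left₀ hH0 hs₃ 2
          have e₂ : s ^ 2 ≤ K ^ 2 := pow_le_pow_left₀ (hH0.trans hs₃) hs₄ 2
          have e₃ : (s - t) ^ 2 ≤ k ^ 2 := sq_le_sq' (by linarith) (by linarith)
          exact ⟨⟨by linarith, by linarith⟩, by linarith⟩
  · have : {s : ℝ | s ^ 2 + w ≤ R ^ 2 ∧ (s - R) ^ 2 + w ≤ ρ ^ 2} = ∅ := by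
      ext s
      simp only [Set.mem_ofPred_eq, Set.mem_empty_iff_false, iff_false, not_and]
      intro _ hs
      nlinarith [sq_nonneg (s - R)]
    simp [this]

/-- Some orthonormal basis has a prescribed vector on the nonnegative ray of its first element. -/
theorem exists_orthonormalBasis_repr_eq_single (n : ℕ) (v : EuclideanSpace ℝ (Fin (n + 1))) :
    ∃ b : OrthonormalBasis (Fin (n + 1)) ℝ (EuclideanSpace ℝ (Fin (n + 1))),
      b.repr v = EuclideanSpace.single 0 ‖v‖ := by
  obtain ⟨e, he, hv⟩ : ∃ e : EuclideanSpace ℝ (Fin (n + 1)), ‖e‖ = 1 ∧ v = ‖v‖ • e := by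
    by_cases hv : v = 0
    · exact ⟨EuclideanSpace.single 0 1, by simp, by simp [hv]⟩
    · refine ⟨‖v‖⁻¹ • v, norm_smul_inv_norm hv, ?_⟩
      rw [smul_smul, mul_inv_cancel₀ (norm_ne_zero_iff.2 hv), one_smul]
  obtain ⟨b, hb⟩ := Orthonormal.exists_orthonormalBasis_extension_of_card_eq (𝕜 := ℝ)
    (E := EuclideanSpace ℝ (Fin (n + 1))) (ι := Fin (n + 1)) (by simp) (v := fun _ => e) (s := {0})
    (by
      rw [orthonormal_iff_ite]
      rintro ⟨i, rfl⟩ ⟨j, rfl⟩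
      simp [he])
  refine ⟨b, ?_⟩
  have hb0 : b 0 = e := hb 0 rfl
  nth_rewrite 1 [hv]
  rw [← hb0, map_smul, b.repr_self]
  ext i
  by_cases hi : i = 0 <;> simp [hi]

/-- Volume-preserving cylindrical coordinates about the axis spanned by `v`. -/
theorem exists_measurePreserving_axis_coordinates (n : ℕ) (v : EuclideanSpace ℝ (Fin (n + 1))) :
    ∃ Φ : EuclideanSpace ℝ (Fin (n + 1)) ≃ᵐ ℝ × (Fin n → ℝ), MeasurePreserving Φ ∧
      (∀ x, ‖x‖ ^ 2 = (Φ x).1 ^ 2 + ∑ i, (Φ x).2 i ^ 2) ∧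
      ∀ x, dist x v ^ 2 = ((Φ x).1 - ‖v‖) ^ 2 + ∑ i, (Φ x).2 i ^ 2 := by
  obtain ⟨b, hb⟩ := exists_orthonormalBasis_repr_eq_single n v
  refine ⟨(b.repr.toMeasurableEquiv.trans (MeasurableEquiv.toLp 2 (Fin (n + 1) → ℝ)).symm).trans
    (MeasurableEquiv.piFinSuccAbove (fun _ => ℝ) 0), ?_, fun x => ?_, fun x => ?_⟩
  · exact (volume_preserving_piFinSuccAbove (fun _ => ℝ) 0).comp
      ((EuclideanSpace.volume_preserving_symm_measurableEquiv_toLp (Fin (n + 1))).comp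
        b.repr.measurePreserving)
  · rw [← b.repr.norm_map, EuclideanSpace.real_norm_sq_eq, Fin.sum_univ_succ]
    rfl
  · rw [← b.repr.dist_map, hb, EuclideanSpace.dist_eq, Real.sq_sqrt (by positivity),
      Fin.sum_univ_succ]
    simp only [Real.dist_eq, sq_abs]
    simp
    rfl

theorem annulus_minimal_intersection_at_outer_boundary (d : ℕ) (hd : 1 ≤ d) (R δ ρ : ℝ)
    (hδ : 0 < δ) (hδR : δ ≤ R) (hρ : 0 < ρ) (hρδ : ρ ≤ δ)
    (q p : EuclideanSpace ℝ (Fin d)) (hq₁ : R - δ ≤ ‖q‖) (hq₂ : ‖q‖ ≤ R) (hp : ‖p‖ = R) :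
    volume (closedBall (0 : EuclideanSpace ℝ (Fin d)) R ∩ closedBall p ρ) ≤
      volume ({x : EuclideanSpace ℝ (Fin d) | R - δ ≤ ‖x‖ ∧ ‖x‖ ≤ R} ∩ closedBall q ρ) := by
  obtain ⟨n, rfl⟩ : ∃ n, d = n + 1 := ⟨d - 1, by omega⟩
  obtain ⟨Φ, hΦ, hΦn, hΦd⟩ := exists_measurePreserving_axis_coordinates n p
  obtain ⟨Ψ, hΨ, hΨn, hΨd⟩ := exists_measurePreserving_axis_coordinates n q
  have hR : 0 ≤ R := by linarith
  have hh : 0 ≤ R - δ := by linarith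
  let S : Set (ℝ × (Fin n → ℝ)) :=
    {y | y.1 ^ 2 + ∑ i, y.2 i ^ 2 ≤ R ^ 2 ∧ (y.1 - R) ^ 2 + ∑ i, y.2 i ^ 2 ≤ ρ ^ 2}
  let T : Set (ℝ × (Fin n → ℝ)) :=
    {y | ((R - δ) ^ 2 ≤ y.1 ^ 2 + ∑ i, y.2 i ^ 2 ∧ y.1 ^ 2 + ∑ i, y.2 i ^ 2 ≤ R ^ 2) ∧
      (y.1 - ‖q‖) ^ 2 + ∑ i, y.2 i ^ 2 ≤ ρ ^ 2}
  have hS : MeasurableSet S := by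
    simp only [S, Set.ofPred_and]
    refine .inter (measurableSet_le ?_ ?_) (measurableSet_le ?_ ?_) <;> fun_prop
  have hT : MeasurableSet T := by
    simp only [T, Set.ofPred_and]
    refine .inter (.inter (measurableSet_le ?_ ?_) (measurableSet_le ?_ ?_))
      (measurableSet_le ?_ ?_) <;> fun_prop
  have hSΦ : closedBall (0 : EuclideanSpace ℝ (Fin (n + 1))) R ∩ closedBall p ρ = Φ ⁻¹' S := by
    ext x
    simp only [Set.mem_inter_iff, mem_closedBall, dist_zero_right, Set.mem_preimage, S,
      Set.mem_ofPred_eq]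
    rw [← hp, ← hΦn, ← hΦd, sq_le_sq₀ (norm_nonneg _) (norm_nonneg _),
      sq_le_sq₀ dist_nonneg hρ.le]
  have hTΨ : {x : EuclideanSpace ℝ (Fin (n + 1)) | R - δ ≤ ‖x‖ ∧ ‖x‖ ≤ R} ∩ closedBall q ρ =
      Ψ ⁻¹' T := by
    ext x
    simp only [Set.mem_inter_iff, mem_closedBall, Set.mem_preimage, T, Set.mem_ofPred_eq]
    rw [← hΨn, ← hΨd, sq_le_sq₀ (norm_nonneg _) hR, sq_le_sq₀ hh (norm_nonneg _),
      sq_le_sq₀ dist_nonneg hρ.le]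
  rw [hSΦ, hTΨ, hΦ.measure_preimage_equiv, hΨ.measure_preimage_equiv, Measure.volume_eq_prod,
    Measure.prod_apply_symm hS, Measure.prod_apply_symm hT]
  exact lintegral_mono fun z => volume_lens_slice_le_volume_annulus_slice hh hρ.le
    (by linarith) hq₁ hq₂ (Finset.sum_nonneg fun i _ => sq_nonneg (z i))
end

section
/- Let d ≥ 1 be an integer and let 0 ≤ A ≤ π. Then ∫_0^A sin^d t dt = 2^d · sin^{d+1}(A/2) · ∫_0^1 u^{(d−1)/2} (1 − u sin²(A/2))^{(d−1)/2} du. -/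
/-- The half-integer power `(n / 2)` of a square of a nonnegative real is the `n`-th power. -/
lemma sq_rpow_natCast_div_two {x : ℝ} (hx : 0 ≤ x) (n : ℕ) :
    (x ^ 2) ^ ((n : ℝ) / 2) = x ^ n := by
  rw [← Real.rpow_natCast x 2, ← Real.rpow_mul hx, ← Real.rpow_natCast x n]
  congr 1
  push_cast
  ring

/-- The substitution `v = sin² (t / 2)` in the integral of a positive power of `sin`. -/
lemma integral_sin_pow_succ_eq_integral_rpow (n : ℕ) {A : ℝ} (hA0 : 0 ≤ A) (hAπ : A ≤ Real.pi) :
    ∫ t in (0 : ℝ)..A, Real.sin t ^ (n + 1) =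
      ∫ v in (0 : ℝ)..Real.sin (A / 2) ^ 2,
        2 ^ (n + 1) * (v ^ ((n : ℝ) / 2) * (1 - v) ^ ((n : ℝ) / 2)) := by
  have hn : (0 : ℝ) ≤ (n : ℝ) / 2 := by positivity
  have hderiv (t : ℝ) : HasDerivAt (fun t ↦ Real.sin (t / 2) ^ 2)
      (Real.sin (t / 2) * Real.cos (t / 2)) t := by
    refine (((hasDerivAt_id' t).div_const 2).sin.pow 2).congr_deriv ?_
    push_cast
    ring
  have hcont : Continuous fun v : ℝ ↦
      (2 : ℝ) ^ (n + 1) * (v ^ ((n : ℝ) / 2) * (1 - v) ^ ((n : ℝ) / 2)) :=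
    continuous_const.mul ((Real.continuous_rpow_const hn).mul
      ((Real.continuous_rpow_const hn).comp (continuous_const.sub continuous_id)))
  have hsubst := intervalIntegral.integral_comp_mul_deriv (a := 0) (b := A)
    (fun t _ ↦ hderiv t) (by fun_prop) hcont
  simp only [zero_div, Real.sin_zero, ne_eq, OfNat.ofNat_ne_zero, not_false_eq_true,
    zero_pow] at hsubst
  rw [← hsubst]
  refine intervalIntegral.integral_congr fun t ht ↦ ?_
  rw [Set.uIcc_of_le hA0] at ht
  have hs : 0 ≤ Real.sin (t / 2) :=
    Real.sin_nonneg_of_nonneg_of_le_pi (by linarith [ht.1]) (by linarith [ht.1, ht.2])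
  have hc : 0 ≤ Real.cos (t / 2) :=
    Real.cos_nonneg_of_neg_pi_div_two_le_of_le (by linarith [ht.1, Real.pi_pos])
      (by linarith [ht.2])
  have hsin : Real.sin t = 2 * Real.sin (t / 2) * Real.cos (t / 2) := by
    rw [← Real.sin_two_mul]
    congr 1
    ring
  simp only [Function.comp_apply]
  rw [← Real.cos_sq', sq_rpow_natCast_div_two hs, sq_rpow_natCast_div_two hc, hsin]
  ring

theorem sin_pow_integral_substitution (d : ℕ) (hd : 1 ≤ d) (A : ℝ) (hA0 : 0 ≤ A)
    (hAπ : A ≤ Real.pi) :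
    ∫ t in (0 : ℝ)..A, Real.sin t ^ d =
      2 ^ d * Real.sin (A / 2) ^ (d + 1) *
        ∫ u in (0 : ℝ)..1,
          u ^ (((d : ℝ) - 1) / 2) * (1 - u * Real.sin (A / 2) ^ 2) ^ (((d : ℝ) - 1) / 2) := by
  obtain ⟨n, rfl⟩ := Nat.exists_eq_add_of_le' hd
  have hS : 0 ≤ Real.sin (A / 2) :=
    Real.sin_nonneg_of_nonneg_of_le_pi (by linarith) (by linarith)
  have hscale := intervalIntegral.mul_integral_comp_mul_right (a := 0) (b := 1)
    (f := fun v : ℝ ↦ (2 : ℝ) ^ (n + 1) * (v ^ ((n : ℝ) / 2) * (1 - v) ^ ((n : ℝ) / 2)))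
    (c := Real.sin (A / 2) ^ 2)
  rw [zero_mul, one_mul] at hscale
  rw [integral_sin_pow_succ_eq_integral_rpow n hA0 hAπ, ← hscale,
    ← intervalIntegral.integral_const_mul, ← intervalIntegral.integral_const_mul]
  refine intervalIntegral.integral_congr fun u hu ↦ ?_
  rw [Set.uIcc_of_le zero_le_one] at hu
  simp only [Nat.cast_add, Nat.cast_one, add_sub_cancel_right]
  rw [Real.mul_rpow hu.1 (sq_nonneg _), sq_rpow_natCast_div_two hS]
  ring
end

section
/- Let d ≥ 1 be an integer and let 0 ≤ s ≤ 1/2. Then ∫_0^1 t^{(d−1)/2} (1 − t s)^{(d−1)/2} dt ≥ 2^{(d−1)/2} · Γ((d+1)/2)² / Γ(d+1). -/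
/-- The Beta integral at `(p + 1, p + 1)`, expressed through the Gamma function. -/
theorem integral_rpow_mul_one_sub_rpow {p : ℝ} (hp : 0 ≤ p) :
    ∫ u in (0 : ℝ)..1, u ^ p * (1 - u) ^ p =
      Real.Gamma (p + 1) ^ 2 / Real.Gamma (2 * p + 2) := by
  have hp1 : 0 < p + 1 := by linarith
  have hre : 0 < ((p + 1 : ℝ) : ℂ).re := by simpa using hp1
  have h := Complex.betaIntegral_eq_Gamma_mul_div (p + 1 : ℝ) (p + 1 : ℝ) hre hre
  have hbeta : Complex.betaIntegral (p + 1 : ℝ) (p + 1 : ℝ) =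
      ((∫ u in (0 : ℝ)..1, u ^ p * (1 - u) ^ p : ℝ) : ℂ) := by
    rw [Complex.betaIntegral, ← intervalIntegral.integral_ofReal]
    refine intervalIntegral.integral_congr fun u hu ↦ ?_
    rw [Set.uIcc_of_le zero_le_one] at hu
    simp [Complex.ofReal_cpow hu.1, Complex.ofReal_cpow (sub_nonneg.2 hu.2)]
  rw [hbeta, ← Complex.ofReal_add, Complex.Gamma_ofReal, Complex.Gamma_ofReal,
    ← Complex.ofReal_mul, ← Complex.ofReal_div, Complex.ofReal_inj] at h
  rw [h, sq, show p + 1 + (p + 1) = 2 * p + 2 by ring]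

/-- The integrand of the Beta integral is symmetric about `1 / 2`. -/
theorem integral_rpow_mul_one_sub_rpow_eq_two_mul {p : ℝ} (hp : 0 ≤ p) :
    ∫ u in (0 : ℝ)..1, u ^ p * (1 - u) ^ p =
      2 * ∫ u in (0 : ℝ)..1 / 2, u ^ p * (1 - u) ^ p := by
  have hc : Continuous fun u : ℝ ↦ u ^ p * (1 - u) ^ p :=
    (Real.continuous_rpow_const hp).mul
      ((Real.continuous_rpow_const hp).comp (continuous_const.sub continuous_id))
  have hsymm : ∫ u in (1 / 2 : ℝ)..1, u ^ p * (1 - u) ^ p =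
      ∫ u in (0 : ℝ)..1 / 2, u ^ p * (1 - u) ^ p := by
    have h := intervalIntegral.integral_comp_sub_left (a := 0) (b := 1 / 2)
      (fun u : ℝ ↦ u ^ p * (1 - u) ^ p) 1
    norm_num at h ⊢
    simpa [mul_comm] using h.symm
  rw [← intervalIntegral.integral_add_adjacent_intervals (hc.intervalIntegrable 0 (1 / 2))
    (hc.intervalIntegrable (1 / 2) 1), hsymm, two_mul]

theorem integral_rpow_mul_one_sub_half_rpow {p : ℝ} (hp : 0 ≤ p) :
    ∫ t in (0 : ℝ)..1, t ^ p * (1 - t * (1 / 2)) ^ p =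
      2 ^ p * Real.Gamma (p + 1) ^ 2 / Real.Gamma (2 * p + 2) := by
  have hsubst := intervalIntegral.integral_comp_mul_right (a := 0) (b := 1)
    (fun u : ℝ ↦ 2 ^ p * (u ^ p * (1 - u) ^ p)) (c := 1 / 2) (by norm_num)
  have hcongr : ∫ t in (0 : ℝ)..1, t ^ p * (1 - t * (1 / 2)) ^ p =
      ∫ t in (0 : ℝ)..1, 2 ^ p * ((t * (1 / 2)) ^ p * (1 - t * (1 / 2)) ^ p) := by
    refine intervalIntegral.integral_congr fun t ht ↦ ?_
    rw [Set.uIcc_of_le zero_le_one] at ht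
    have h : (2 : ℝ) ^ p * (t * (1 / 2)) ^ p = t ^ p := by
      rw [← Real.mul_rpow zero_le_two (by linarith [ht.1])]
      ring_nf
    simp only [← mul_assoc, h]
  rw [hcongr, hsubst, intervalIntegral.integral_const_mul, zero_mul, one_mul, mul_div_assoc,
    ← integral_rpow_mul_one_sub_rpow hp, integral_rpow_mul_one_sub_rpow_eq_two_mul hp,
    smul_eq_mul]
  ring

theorem beta_lower_bound (d : ℕ) (hd : 1 ≤ d) (s : ℝ) (hs0 : 0 ≤ s) (hs : s ≤ 1 / 2) :
    (2 : ℝ) ^ (((d : ℝ) - 1) / 2) * Real.Gamma (((d : ℝ) + 1) / 2) ^ 2 /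
        Real.Gamma ((d : ℝ) + 1) ≤
      ∫ t in (0 : ℝ)..1, t ^ (((d : ℝ) - 1) / 2) * (1 - t * s) ^ (((d : ℝ) - 1) / 2) := by
  have hd1 : (1 : ℝ) ≤ d := by exact_mod_cast hd
  set p : ℝ := ((d : ℝ) - 1) / 2 with hp_def
  have hp : 0 ≤ p := by linarith
  have hcont (r : ℝ) : Continuous fun t : ℝ ↦ t ^ p * (1 - t * r) ^ p :=
    (Real.continuous_rpow_const hp).mul
      ((Real.continuous_rpow_const hp).comp (by fun_prop : Continuous fun t : ℝ ↦ 1 - t * r))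
  rw [show ((d : ℝ) + 1) / 2 = p + 1 by rw [hp_def]; ring,
    show (d : ℝ) + 1 = 2 * p + 2 by rw [hp_def]; ring,
    ← integral_rpow_mul_one_sub_half_rpow hp]
  refine intervalIntegral.integral_mono_on zero_le_one ((hcont _).intervalIntegrable _ _)
    ((hcont _).intervalIntegrable _ _) fun t ht ↦ ?_
  have hts : t * s ≤ t * (1 / 2) := mul_le_mul_of_nonneg_left hs ht.1
  exact mul_le_mul_of_nonneg_left
    (Real.rpow_le_rpow (by linarith [ht.2]) (by linarith) hp) (Real.rpow_nonneg ht.1 p)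
end
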